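/- arXiv:math/9307219 — 2 statements merged into one kernel-verified Lean document; each statement's English description precedes it below -/
import Mathlib

section
/- For each n ≥ 0, the number of permutations of S_{n+1} in which 1 and n+1 belong to the same maximal increasing run, and in which no left-to-right minimum occurring to the right of n+1 forms a singleton run, equals n!. -/
/-!
The letter `1` begins its run and `n+1` ends its run, so for `n ≥ 1` the permutations in question are
the words `A 1 C (n+1) B` with `A` arbitrary, `C` increasing, and `B` a word none of whose
left-to-right minima is a singleton run (`SS.cond_iff`). A left-to-right minimum of `B` always
starts a run, because the preceding letter is larger (for the first letter of `B`, it is `n+1`);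
so the condition on `B` says that each left-to-right minimum is followed by a larger letter.

Reading a word as a product of cycles that begin at its left-to-right minima, singleton runs at
minima are fixed points. A word `E` is thus the same as an increasing word `C` (its fixed points)
together with a word `B` without singleton minima (a derangement of the other letters). Hence
`A 1 C (n+1) B ↦ A 1 E` is a bijection onto all arrangements of `1, …, n`, of which there are `n!`.

The passage between `E` and `w = C N B`, where `N` is larger than all other letters, is encoded as
the relation `SS.Straighten N E w`, generated by splitting at the smallest letter. The relation is
left- and right-unique, defined on every duplicate-free `E`, and its right-hand sides are exactly
the words `C N B` as above; `SS.card_admissible` derives the count from this. Letters are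
shifted down by one, so that the smallest is `0` and the largest `n`.
-/

open Finset

namespace SS

variable {n : ℕ}

/-- `descB σ j = true` iff there is a descent between positions `j` and `j+1`
in the word `σ(1)σ(2)⋯σ(n)`. -/
def descB (σ : Equiv.Perm (Fin n)) (j : ℕ) : Bool :=
  if h : j + 1 < n then decide ((σ ⟨j+1, h⟩) < σ ⟨j, Nat.lt_of_succ_lt h⟩) else false

/-- The index of the maximal increasing run containing position `p`. -/
def runIdx (σ : Equiv.Perm (Fin n)) (p : ℕ) : ℕ :=
  ((Finset.range p).filter (fun j => descB σ j = true)).card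

/-- The index of the run containing the value `v`. -/
def runOf (σ : Equiv.Perm (Fin n)) (v : Fin n) : ℕ := runIdx σ (σ.symm v).val

/-- The number of maximal increasing runs of `σ`. -/
def runCount (σ : Equiv.Perm (Fin n)) : ℕ :=
  if n = 0 then 0 else runIdx σ n + 1

/-- `lsgAt σ v` : number of runs strictly to the left of (the run of) `v`
containing both an element smaller than `v` and an element greater than `v`. -/
def lsgAt (σ : Equiv.Perm (Fin n)) (v : Fin n) : ℕ :=
  ((Finset.range (runCount σ)).filter (fun r => r < runOf σ v ∧
      (∃ a : Fin n, runOf σ a = r ∧ a < v) ∧ (∃ b : Fin n, runOf σ b = r ∧ v < b))).card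

/-- `rsgAt σ v` : number of runs strictly to the right of `v`
containing both an element smaller than `v` and an element greater than `v`. -/
def rsgAt (σ : Equiv.Perm (Fin n)) (v : Fin n) : ℕ :=
  ((Finset.range (runCount σ)).filter (fun r => runOf σ v < r ∧
      (∃ a : Fin n, runOf σ a = r ∧ a < v) ∧ (∃ b : Fin n, runOf σ b = r ∧ v < b))).card

def lsg (σ : Equiv.Perm (Fin n)) : ℕ := ∑ v : Fin n, lsgAt σ v
def rsg (σ : Equiv.Perm (Fin n)) : ℕ := ∑ v : Fin n, rsgAt σ v

/-- position `p` begins a maximal increasing run. -/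
def startsB (σ : Equiv.Perm (Fin n)) (p : ℕ) : Bool := p == 0 || descB σ (p - 1)

/-- position `p` ends a maximal increasing run. -/
def endsB (σ : Equiv.Perm (Fin n)) (p : ℕ) : Bool := p + 1 == n || descB σ p

def openerB (σ : Equiv.Perm (Fin n)) (v : Fin n) : Bool :=
  startsB σ (σ.symm v).val && !endsB σ (σ.symm v).val
def closerB (σ : Equiv.Perm (Fin n)) (v : Fin n) : Bool :=
  endsB σ (σ.symm v).val && !startsB σ (σ.symm v).val
def singB (σ : Equiv.Perm (Fin n)) (v : Fin n) : Bool :=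
  startsB σ (σ.symm v).val && endsB σ (σ.symm v).val
def contB (σ : Equiv.Perm (Fin n)) (v : Fin n) : Bool :=
  !startsB σ (σ.symm v).val && !endsB σ (σ.symm v).val

def lsgOp (σ : Equiv.Perm (Fin n)) : ℕ :=
  ∑ v ∈ univ.filter (fun v : Fin n => openerB σ v = true), lsgAt σ v
def rsgOp (σ : Equiv.Perm (Fin n)) : ℕ :=
  ∑ v ∈ univ.filter (fun v : Fin n => openerB σ v = true), rsgAt σ v
def lsgClos (σ : Equiv.Perm (Fin n)) : ℕ :=
  ∑ v ∈ univ.filter (fun v : Fin n => closerB σ v = true), lsgAt σ v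
def rsgClos (σ : Equiv.Perm (Fin n)) : ℕ :=
  ∑ v ∈ univ.filter (fun v : Fin n => closerB σ v = true), rsgAt σ v
def lsgSing (σ : Equiv.Perm (Fin n)) : ℕ :=
  ∑ v ∈ univ.filter (fun v : Fin n => singB σ v = true), lsgAt σ v
def rsgSing (σ : Equiv.Perm (Fin n)) : ℕ :=
  ∑ v ∈ univ.filter (fun v : Fin n => singB σ v = true), rsgAt σ v
def lsgCont (σ : Equiv.Perm (Fin n)) : ℕ :=
  ∑ v ∈ univ.filter (fun v : Fin n => contB σ v = true), lsgAt σ v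
def rsgCont (σ : Equiv.Perm (Fin n)) : ℕ :=
  ∑ v ∈ univ.filter (fun v : Fin n => contB σ v = true), rsgAt σ v

/-- `[m]_q = 1 + q + ⋯ + q^{m-1}`. -/
def qint {R : Type*} [CommRing R] (q : R) (m : ℕ) : R := ∑ i ∈ Finset.range m, q ^ i

/-- `[n]_q! = [1]_q [2]_q ⋯ [n]_q`. -/
def qfact {R : Type*} [CommRing R] (q : R) (n : ℕ) : R := ∏ m ∈ Finset.range n, qint q (m+1)

/-- `moment b lam l h` : sum of the weights of all weighted Motzkin paths with `l` steps
starting at height `h` and ending at height `0`, where up steps have weight `1`,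
a level step at height `k` has weight `b k`, and a down step from height `k`
has weight `lam k`.  The `n`th moment of the corresponding monic orthogonal
polynomial sequence is `moment b lam n 0`. -/
def moment {R : Type*} [CommRing R] (b lam : ℕ → R) : ℕ → ℕ → R
  | 0, h => if h = 0 then 1 else 0
  | (l+1), h => moment b lam l (h+1) + b h * moment b lam l h +
      (if h = 0 then 0 else lam h * moment b lam l (h-1))

end SS
namespace SS

/-! ### The bijection on words -/

/-- The word `B` has no left-to-right minimum that is a run of length one: every left-to-right
minimum is followed by a larger letter. -/
def NoSingMin (B : List ℕ) : Prop :=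
  ∀ p (h : p < B.length), (∀ j (hj : j < p), B[p] < B[j]) →
    ∃ h' : p + 1 < B.length, B[p] < B[p + 1]

/-- `Straighten N E w` is the graph of the bijection `E ↦ w = C N B`, where `C` is the increasing
list of the left-to-right minima of `E` that are singleton runs, and `B` is what remains of `E`.
It is generated by splitting a word at its smallest letter `m`: if `m` is the last letter of `E`, it
becomes the first letter of `C`; otherwise `m` and everything after it stay at the end of `B`. -/
inductive Straighten (N : ℕ) : List ℕ → List ℕ → Prop
  | nil : Straighten N [] [N]
  | fix {E w m} : Straighten N E w → (∀ x ∈ E, m < x) → Straighten N (E ++ [m]) (m :: w)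
  | cyc {E w m T} : Straighten N E w → (∀ x ∈ E, m < x) → (∀ x ∈ T, m < x) → T ≠ [] →
      Straighten N (E ++ m :: T) (w ++ m :: T)

/-- A smallest letter `m` is the last left-to-right minimum, and it is a singleton run exactly when
nothing follows it. -/
lemma noSingMin_append {P T : List ℕ} {m : ℕ} (hP : ∀ x ∈ P, m < x) (hT : ∀ x ∈ T, m < x) :
    NoSingMin (P ++ m :: T) ↔ T ≠ [] ∧ NoSingMin P := by
  constructor
  · intro h
    constructor
    · have := h P.length (by simp) (by
        intro j hj
        have : P[j] ∈ P := List.getElem_mem hj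
        simpa [List.getElem_append, hj] using hP _ this)
      obtain ⟨h', -⟩ := this
      rintro rfl
      simp at h'
    · intro p hp hmin
      obtain ⟨h', h2⟩ := h p (by simp; omega) (by
        intro j hj
        have := hmin j hj
        simpa [List.getElem_append, hp, hj.trans hp] using this)
      have : P[p] ∈ P := List.getElem_mem hp
      have := hP _ this
      rcases Nat.lt_or_ge (p + 1) P.length with h3 | h3
      · refine ⟨h3, ?_⟩
        simpa [List.getElem_append, hp, h3] using h2
      · exfalso
        have h4 : p + 1 = P.length := by omega
        simp [hp, h4] at h2
        omega
  · rintro ⟨hne, hg⟩ p hp hmin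
    rcases lt_trichotomy p P.length with h3 | h3 | h3
    · obtain ⟨h', h2⟩ := hg p h3 (by
        intro j hj
        have := hmin j hj
        simpa [List.getElem_append, h3, hj.trans h3] using this)
      refine ⟨by simp; omega, ?_⟩
      simpa [List.getElem_append, h3, h'] using h2
    · subst h3
      obtain ⟨t, T, rfl⟩ := List.exists_cons_of_ne_nil hne
      refine ⟨by simp, ?_⟩
      simpa [List.getElem_append] using hT t (by simp)
    · exfalso
      have h1 := hmin P.length h3
      have h2 : (P ++ m :: T)[P.length]'(by simp) = m := by simp
      have h4 : (P ++ m :: T)[p] ∈ m :: T := by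
        rw [List.getElem_append_right (by omega)]
        exact List.getElem_mem _
      rw [h2] at h1
      rcases List.mem_cons.1 h4 with h5 | h5
      · omega
      · have := hT _ h5
        omega

/-- `E` and `w` have the same letters, apart from the additional letter `N` of `w`. -/
lemma Straighten.perm {N E w} (h : Straighten N E w) : w.Perm (N :: E) := by
  induction h with
  | nil => exact List.Perm.refl _
  | @fix E w m h hm ih =>
    exact (ih.cons m).trans ((List.Perm.swap N m E).trans
      ((List.perm_append_singleton m E).symm.cons N))
  | @cyc E w m T h hm hT hne ih => exact ih.append_right (m :: T)

/-- A nonempty duplicate-free word splits at its smallest letter. -/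
lemma exists_split_min {l : List ℕ} (hne : l ≠ []) (hd : l.Nodup) :
    ∃ m P T, l = P ++ m :: T ∧ (∀ x ∈ P, m < x) ∧ ∀ x ∈ T, m < x := by
  obtain ⟨m, hm, hmin⟩ := l.toFinset.exists_min_image id
    (by simpa [List.toFinset_nonempty_iff] using hne)
  obtain ⟨P, T, rfl⟩ := List.append_of_mem (List.mem_toFinset.1 hm)
  refine ⟨m, P, T, rfl, ?_, ?_⟩
  · intro x hx
    have h1 := hmin x (by simp [hx])
    have : x ≠ m := by rintro rfl; simp [List.nodup_append] at hd; grind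
    simp only [id] at h1; omega
  · intro x hx
    have h1 := hmin x (by simp [hx])
    have : x ≠ m := by rintro rfl; simp [List.nodup_append] at hd; grind
    simp only [id] at h1; omega

lemma Straighten.exists_right (N : ℕ) (E : List ℕ) (hd : E.Nodup) : ∃ w, Straighten N E w := by
  induction hk : E.length using Nat.strong_induction_on generalizing E with
  | _ k ih =>
    rcases eq_or_ne E [] with rfl | hne
    · exact ⟨_, .nil⟩
    · obtain ⟨m, P, T, rfl, hP, hT⟩ := exists_split_min hne hd
      obtain ⟨w, hw⟩ := ih P.length (by subst hk; simp) P hd.of_append_left rfl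
      rcases eq_or_ne T [] with rfl | hT0
      · exact ⟨_, .fix hw hP⟩
      · exact ⟨_, .cyc hw hP hT hT0⟩

/-- Two splittings of a word at its smallest letter coincide. -/
lemma split_min_unique {P P' T T' : List ℕ} {m m' : ℕ} (h : P ++ m :: T = P' ++ m' :: T')
    (hP : ∀ x ∈ P, m < x) (hT : ∀ x ∈ T, m < x) (hP' : ∀ x ∈ P', m' < x)
    (hT' : ∀ x ∈ T', m' < x) : P = P' ∧ m = m' ∧ T = T' := by
  have hm : m = m' := by
    have h1 : m ∈ P' ++ m' :: T' := by rw [← h]; simp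
    have h2 : m' ∈ P ++ m :: T := by rw [h]; simp
    simp only [List.mem_append, List.mem_cons] at h1 h2
    grind
  subst hm
  have h1 : m ∉ P := fun hx => lt_irrefl _ (hP m hx)
  have h3 : m ∉ T := fun hx => lt_irrefl _ (hT m hx)
  rw [List.append_cons_inj_of_notMem h1 h3] at h
  exact h

lemma Straighten.right_unique {N E w w'} (h : Straighten N E w) (h' : Straighten N E w') :
    w = w' := by
  induction h generalizing w' with
  | nil =>
    generalize hE : ([] : List ℕ) = E' at h'
    cases h' <;> simp_all
  | @fix E w m h hm ih =>
    generalize hE : E ++ [m] = E' at h'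
    cases h' with
    | nil => simp at hE
    | fix h1 hm1 =>
      obtain ⟨rfl, rfl, -⟩ := split_min_unique hE hm (by simp) hm1 (by simp)
      rw [ih h1]
    | cyc h1 hm1 hT1 hne =>
      obtain ⟨-, -, h3⟩ := split_min_unique hE hm (by simp) hm1 hT1
      exact absurd h3.symm hne
  | @cyc E w m T h hm hT hne ih =>
    generalize hE : E ++ m :: T = E' at h'
    cases h' with
    | nil => simp at hE
    | fix h1 hm1 =>
      obtain ⟨-, -, h3⟩ := split_min_unique hE hm hT hm1 (by simp)
      exact absurd h3 hne
    | cyc h1 hm1 hT1 hne =>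
      obtain ⟨rfl, rfl, rfl⟩ := split_min_unique hE hm hT hm1 hT1
      rw [ih h1]

lemma Straighten.lt_right {N E w m} (h : Straighten N E w) (hm : ∀ x ∈ E, m < x) (hN : m < N) :
    ∀ x ∈ w, m < x := by
  intro x hx
  rcases List.mem_cons.1 (h.perm.mem_iff.1 hx) with rfl | h1
  · exact hN
  · exact hm x h1

lemma Straighten.ne_nil {N E w} (h : Straighten N E w) : w ≠ [] := by
  rintro rfl
  simpa using h.perm

lemma Straighten.left_unique {N E E' w} (h : Straighten N E w) (h' : Straighten N E' w)
    (hN : ∀ x ∈ E, x < N) (hN' : ∀ x ∈ E', x < N) : E = E' := by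
  induction h generalizing E' with
  | nil => simpa using h'.perm.length_eq.symm
  | @fix E w m h hm ih =>
    have hmw := h.lt_right hm (hN m (by simp))
    generalize hw : m :: w = w1 at h'
    cases h' with
    | nil => exact absurd (List.cons.inj hw).2 h.ne_nil
    | @fix E1 w1 m1 h1 hm1 =>
      obtain ⟨rfl, rfl⟩ := List.cons.inj hw
      rw [ih h1 (fun x hx => hN x (by simp [hx])) (fun x hx => hN' x (by simp [hx]))]
    | @cyc E1 w1 m1 T1 h1 hm1 hT1 hne =>
      obtain ⟨h3, -⟩ := split_min_unique (P := []) hw (by simp) hmw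
        (h1.lt_right hm1 (hN' _ (by simp))) hT1
      exact absurd h3.symm h1.ne_nil
  | @cyc E w m T h hm hT hne ih =>
    have hmw := h.lt_right hm (hN m (by simp))
    generalize hw : w ++ m :: T = w1 at h'
    cases h' with
    | nil =>
      have := congrArg List.length hw
      have := List.length_pos_iff.2 h.ne_nil
      simp at *
      omega
    | @fix E1 w1 m1 h1 hm1 =>
      obtain ⟨h3, -⟩ := split_min_unique (P' := []) hw hmw hT (by simp)
        (h1.lt_right hm1 (hN' _ (by simp)))
      exact absurd h3 h.ne_nil
    | @cyc E1 w1 m1 T1 h1 hm1 hT1 hne =>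
      obtain ⟨rfl, rfl, rfl⟩ := split_min_unique hw hmw hT
        (h1.lt_right hm1 (hN' _ (by simp))) hT1
      rw [ih h1 (fun x hx => hN x (by simp [hx])) (fun x hx => hN' x (by simp [hx]))]

lemma Straighten.shape {N E w} (h : Straighten N E w) :
    ∃ C B, w = C ++ N :: B ∧ C.Pairwise (· < ·) ∧ NoSingMin B ∧ ∀ x, x ∈ E ↔ x ∈ C ∨ x ∈ B := by
  induction h with
  | nil => exact ⟨[], [], rfl, .nil, fun p h => absurd h (by simp), by simp⟩
  | @fix E w m h hm ih =>
    obtain ⟨C, B, rfl, hC, hB, hE⟩ := ih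
    refine ⟨m :: C, B, rfl, List.pairwise_cons.2 ⟨fun x hx => hm x ((hE x).2 (.inl hx)), hC⟩,
      hB, ?_⟩
    intro x
    simp [hE]
    tauto
  | @cyc E w m T h hm hT hne ih =>
    obtain ⟨C, B, rfl, hC, hB, hE⟩ := ih
    refine ⟨C, B ++ m :: T, by simp, hC, (noSingMin_append
      (fun x hx => hm x ((hE x).2 (.inr hx))) hT).2 ⟨hne, hB⟩, ?_⟩
    intro x
    simp [hE]
    tauto

/-- Every word of the form `C N B` is reached, by removing the smallest letter of `C B`. -/
lemma Straighten.exists_left (N : ℕ) (C B : List ℕ) (hC : C.Pairwise (· < ·)) (hB : NoSingMin B)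
    (hd : (C ++ B).Nodup) : ∃ E, Straighten N E (C ++ N :: B) := by
  induction hk : (C ++ B).length using Nat.strong_induction_on generalizing C B with
  | _ k ih =>
    rcases eq_or_ne (C ++ B) [] with h0 | hne
    · obtain ⟨rfl, rfl⟩ := List.append_eq_nil_iff.1 h0
      exact ⟨_, .nil⟩
    · obtain ⟨m, P, T, h1, hP, hT⟩ := exists_split_min hne hd
      have hmin : ∀ x ∈ C ++ B, m ≤ x := by
        intro x hx
        rw [h1] at hx
        simp at hx
        grind
      have hm : m ∈ C ++ B := by rw [h1]; simp
      rcases List.mem_append.1 hm with hmC | hmB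
      · -- the minimum of an increasing word is its first letter
        obtain _ | ⟨c, C⟩ := C
        · simp at hmC
        have hc := List.pairwise_cons.1 hC
        have hmc : c = m := by
          have := hmin c (by simp)
          rcases List.mem_cons.1 hmC with h | h
          · exact h.symm
          · have := hc.1 m h; omega
        subst hmc
        obtain ⟨E, hE⟩ := ih (C ++ B).length (by subst hk; simp) C B hc.2 hB
          (List.nodup_cons.1 hd).2 rfl
        refine ⟨E ++ [c], .fix hE ?_⟩
        intro x hx
        have hx' : x ∈ C ++ B := by
          have h3 := hE.perm
          have h4 : (C ++ N :: B).Perm (N :: (C ++ B)) := List.perm_middle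
          exact ((h4.symm.trans h3).cons_inv).mem_iff.2 hx
        have h5 := hmin x (by simpa using Or.inr (List.mem_append.1 hx'))
        have h6 : x ≠ c := by
          rintro rfl
          exact (List.nodup_cons.1 hd).1 hx'
        omega
      · obtain ⟨P, T, rfl⟩ := List.append_of_mem hmB
        have hlt : ∀ x ∈ C ++ P ++ T, m < x := by
          intro x hx
          have h5 := hmin x (by simp at hx ⊢; tauto)
          have h6 : x ≠ m := by
            rintro rfl
            have : (x :: (C ++ P ++ T)).Nodup := by
              refine List.Perm.nodup ?_ hd
              rw [← List.append_assoc]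
              exact List.perm_middle
            exact (List.nodup_cons.1 this).1 hx
          omega
        obtain ⟨hne, hP⟩ := (noSingMin_append (fun x hx => hlt x (by simp [hx]))
          (fun x hx => hlt x (by simp [hx]))).1 hB
        obtain ⟨E, hE⟩ := ih (C ++ P).length (by subst hk; simp) C P hC hP
          (by rw [← List.append_assoc] at hd; exact hd.of_append_left) rfl
        refine ⟨E ++ m :: T, ?_⟩
        have := Straighten.cyc (m := m) (T := T) hE (fun x hx => ?_)
          (fun x hx => hlt x (by simp [hx])) hne
        · simpa using this
        · have h3 := hE.perm
          have h4 : (C ++ N :: P).Perm (N :: (C ++ P)) := List.perm_middle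
          have := ((h4.symm.trans h3).cons_inv).mem_iff.2 hx
          exact hlt x (by simp at this ⊢; tauto)

/-! ### Counting words -/

/-- Words `A 1 C (n+1) B` (with letters shifted down by one) in which `C` is increasing and `B` has
no singleton left-to-right minimum. -/
def Admissible (N : ℕ) (l : List ℕ) : Prop :=
  ∃ A C B, l = A ++ 0 :: (C ++ N :: B) ∧ C.Pairwise (· < ·) ∧ NoSingMin B

open Classical in
/-- `A 0 E ↦ A 0 w`, with `Straighten N E w`, is a bijection from the arrangements of
`0, …, N - 1` to the admissible arrangements of `0, …, N`. -/
lemma card_admissible (N : ℕ) (hN : 0 < N) :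
    ((List.range (N + 1)).permutations.toFinset.filter (Admissible N)).card = N.factorial := by
  have hcard : (List.range N).permutations.toFinset.card = N.factorial := by
    rw [List.toFinset_card_of_nodup (List.nodup_permutations _ List.nodup_range),
      List.length_permutations, List.length_range]
  rw [← hcard]
  symm
  have key : ∀ l ∈ (List.range N).permutations.toFinset,
      ∃ A E w, l = A ++ 0 :: E ∧ Straighten N E w := by
    intro l hl
    have hp : l.Perm (List.range N) := by simpa using hl
    obtain ⟨A, E, rfl⟩ := List.append_of_mem (hp.mem_iff.2 (List.mem_range.2 hN))
    have hd := hp.nodup_iff.2 List.nodup_range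
    obtain ⟨w, hw⟩ := Straighten.exists_right N E (List.nodup_cons.1 hd.of_append_right).2
    exact ⟨A, E, w, rfl, hw⟩
  choose! fA fE fw hl hS using key
  -- a duplicate-free word splits uniquely at the letter `0`
  have hsplit : ∀ {A A' w w' : List ℕ}, (A ++ 0 :: w).Nodup → A ++ 0 :: w = A' ++ 0 :: w' →
      A = A' ∧ w = w' := by
    intro A A' w w' hd h
    have h1 : 0 ∉ w := (List.nodup_cons.1 hd.of_append_right).1
    have h2 : 0 ∉ A := fun h0 => (List.nodup_append.1 hd).2.2 0 h0 0 (by simp) rfl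
    have h3 := (List.append_cons_inj_of_notMem h2 h1).1 h
    exact ⟨h3.1, h3.2.2⟩
  have hperm : ∀ {A E w : List ℕ}, Straighten N E w → ((A ++ 0 :: w).Perm (List.range (N + 1)) ↔
      (A ++ 0 :: E).Perm (List.range N)) := by
    intro A E w h
    have h1 : (A ++ 0 :: w).Perm (N :: (A ++ 0 :: E)) := by
      have := (h.perm.cons 0).trans (List.Perm.swap N 0 E)
      exact (this.append_left A).trans List.perm_middle
    have h2 : (List.range (N + 1)).Perm (N :: List.range N) := by
      rw [List.range_succ]; exact List.perm_append_singleton _ _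
    constructor
    · intro h3
      exact (h1.symm.trans (h3.trans h2)).cons_inv
    · intro h3
      exact h1.trans ((h3.cons N).trans h2.symm)
  refine Finset.card_bij (fun l _ => fA l ++ 0 :: fw l) ?_ ?_ ?_
  · intro l hmem
    have hp : l.Perm (List.range N) := by simpa using hmem
    rw [hl l hmem] at hp
    obtain ⟨C, B, h1, h2, h3, -⟩ := (hS l hmem).shape
    simp only [Finset.mem_filter, List.mem_toFinset, List.mem_permutations]
    exact ⟨(hperm (hS l hmem)).2 hp, fA l, C, B, by rw [h1], h2, h3⟩
  · intro l hmem l' hmem' heq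
    have hp : l.Perm (List.range N) := by simpa using hmem
    have hp' : l'.Perm (List.range N) := by simpa using hmem'
    rw [hl l hmem] at hp
    rw [hl l' hmem'] at hp'
    have hd := ((hperm (hS l hmem)).2 hp).nodup_iff.2 List.nodup_range
    obtain ⟨h1, h2⟩ := hsplit hd heq
    have hS' := hS l' hmem'
    rw [← h2] at hS'
    have h3 := (hS l hmem).left_unique hS'
      (fun x hx => List.mem_range.1 (hp.mem_iff.1 (by simp [hx])))
      (fun x hx => List.mem_range.1 (hp'.mem_iff.1 (by simp [hx])))
    rw [hl l hmem, hl l' hmem', h1, h3]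
  · intro l hmem
    simp only [Finset.mem_filter, List.mem_toFinset, List.mem_permutations] at hmem
    obtain ⟨hp, A, C, B, rfl, hC, hB⟩ := hmem
    have hd := hp.nodup_iff.2 List.nodup_range
    have hd2 : (C ++ B).Nodup := by
      have h1 := (List.nodup_cons.1 hd.of_append_right).2
      exact (List.nodup_cons.1 (List.perm_middle.nodup_iff.1 h1)).2
    obtain ⟨E, hE⟩ := Straighten.exists_left N C B hC hB hd2
    have hmem : A ++ 0 :: E ∈ (List.range N).permutations.toFinset := by
      simpa using (hperm hE).1 hp
    refine ⟨A ++ 0 :: E, hmem, ?_⟩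
    have hdE := ((hperm hE).1 hp).nodup_iff.2 List.nodup_range
    obtain ⟨h1, h2⟩ := hsplit hdE (hl _ hmem)
    have hS' := hS _ hmem
    rw [← h2] at hS'
    rw [← h1, hS'.right_unique hE]

/-! ### From permutations to words -/

lemma runIdx_eq_iff {n : ℕ} (σ : Equiv.Perm (Fin n)) {a b : ℕ} (hab : a ≤ b) :
    runIdx σ a = runIdx σ b ↔ ∀ j, a ≤ j → j < b → descB σ j = false := by
  unfold runIdx
  have hsub : (Finset.range a).filter (fun j => descB σ j = true) ⊆
      (Finset.range b).filter (fun j => descB σ j = true) :=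
    Finset.filter_subset_filter _ (Finset.range_subset_range.2 hab)
  constructor
  · intro h j hj hjb
    by_contra hne
    have h1 := Finset.eq_of_subset_of_card_le hsub h.ge
    have : j ∈ (Finset.range b).filter (fun j => descB σ j = true) := by
      simpa [hjb] using hne
    rw [← h1] at this
    simp at this
    omega
  · intro h
    congr 1
    refine Finset.Subset.antisymm hsub ?_
    intro j hj
    simp at hj ⊢
    refine ⟨?_, hj.2⟩
    by_contra hja
    rw [h j (by omega) hj.1] at hj
    simp at hj

/-- The word of `σ`, with letters `0, …, n - 1`. -/
def word {n : ℕ} (σ : Equiv.Perm (Fin n)) : List ℕ := List.ofFn fun i => (σ i).val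

lemma word_perm {n : ℕ} (σ : Equiv.Perm (Fin n)) : (word σ).Perm (List.range n) := by
  have hd : (word σ).Nodup := List.nodup_ofFn.2 (Fin.val_injective.comp σ.injective)
  refine (List.perm_ext_iff_of_nodup hd List.nodup_range).2 fun x => ?_
  simp only [word, List.mem_ofFn, List.mem_range]
  constructor
  · rintro ⟨i, rfl⟩; exact (σ i).isLt
  · intro hx; exact ⟨σ.symm ⟨x, hx⟩, by simp⟩

lemma word_injective {n : ℕ} : Function.Injective (word (n := n)) := by
  intro σ τ h
  have := List.ofFn_injective h
  ext i
  exact congrFun this i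

lemma exists_word {n : ℕ} {l : List ℕ} (h : l.Perm (List.range n)) :
    ∃ σ : Equiv.Perm (Fin n), word σ = l := by
  have hlen : l.length = n := by simpa using h.length_eq
  subst hlen
  have hd := h.nodup_iff.2 List.nodup_range
  let f : Fin l.length → Fin l.length := fun i =>
    ⟨l[i], List.mem_range.1 (h.mem_iff.1 (List.getElem_mem _))⟩
  have hf : Function.Injective f := by
    intro i j hij
    have := congrArg Fin.val hij
    exact Fin.ext ((hd.getElem_inj_iff).1 this)
  refine ⟨Equiv.ofBijective f (Finite.injective_iff_bijective.1 hf), ?_⟩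
  simp [word, f]

lemma descB_eq_false_iff {n : ℕ} (σ : Equiv.Perm (Fin n)) {l : List ℕ} (hl : word σ = l) (j : ℕ) :
    descB σ j = false ↔ ∀ h : j + 1 < l.length, l[j] < l[j + 1] := by
  subst hl
  have hlen : (word σ).length = n := by simp [word]
  unfold descB
  split_ifs with h
  · simp only [decide_eq_false_iff_not, not_lt, word, List.length_ofFn, List.getElem_ofFn]
    have : (σ ⟨j, by omega⟩).val ≠ (σ ⟨j + 1, h⟩).val :=
      fun e => by simpa using σ.injective (Fin.ext e)
    constructor
    · intro h1 _
      exact lt_of_le_of_ne h1 this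
    · intro h1; exact (h1 h).le
  · simp only [true_iff]
    intro h1
    omega

/-- The defining condition of the permutations to be counted. -/
def Cond {n : ℕ} (σ : Equiv.Perm (Fin (n + 1))) : Prop :=
  runOf σ (0 : Fin (n + 1)) = runOf σ (Fin.last n) ∧
    ∀ p : Fin (n + 1), (σ.symm (Fin.last n)).val < p.val →
      (∀ j : Fin (n + 1), (σ.symm (Fin.last n)).val < j.val → j.val < p.val → σ p < σ j) →
      ¬ (startsB σ p.val = true ∧ endsB σ p.val = true)

/-- A value `v` sits at the position given by the length of the part of the word before it. -/
lemma symm_eq {n : ℕ} (σ : Equiv.Perm (Fin n)) {P Q : List ℕ} {v : Fin n}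
    (h : word σ = P ++ v.val :: Q) : (σ.symm v).val = P.length := by
  have hlen : n = P.length + (Q.length + 1) := by
    have := congrArg List.length h
    simpa [word] using this
  have h1 : (word σ)[P.length]? = some v.val := by rw [h]; simp
  have hlt : P.length < n := by omega
  have h2 : σ ⟨P.length, hlt⟩ = v := by
    simp only [word, List.getElem?_ofFn, hlt, dif_pos] at h1
    exact Fin.ext (Option.some.inj h1)
  rw [← h2]
  simp

/-- An ascent-only stretch of a word is increasing. -/
lemma lt_of_ascents {l : List ℕ} {a b : ℕ} (hab : a < b) (hb : b < l.length)
    (h : ∀ j, a ≤ j → j < b → ∀ h : j + 1 < l.length, l[j] < l[j + 1]) : l[a] < l[b] := by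
  induction b, hab using Nat.le_induction with
  | base => exact h a le_rfl (by omega) hb
  | succ b hab ih =>
    exact (ih (by omega) fun j h1 h2 => h j h1 (by omega)).trans (h b (by omega) (by omega) hb)

lemma cond_iff_of_word {n : ℕ} (σ : Equiv.Perm (Fin (n + 1))) {A C B : List ℕ}
    (h : word σ = A ++ 0 :: (C ++ n :: B)) :
    Cond σ ↔ C.Pairwise (· < ·) ∧ NoSingMin B := by
  have hperm := h ▸ word_perm σ
  have hd := hperm.nodup_iff.2 List.nodup_range
  have ha : (σ.symm 0).val = A.length := symm_eq σ (v := 0) h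
  have hb : (σ.symm (Fin.last n)).val = A.length + 1 + C.length := by
    have := symm_eq σ (v := Fin.last n) (P := A ++ 0 :: C) (Q := B) (by rw [h]; simp)
    rw [this]; simp; omega
  have hlen : n + 1 = A.length + 1 + C.length + 1 + B.length := by
    have := congrArg List.length h
    simp [word] at this
    omega
  have hB : ∀ q (hq : q < B.length) (hq' : A.length + 1 + C.length + 1 + q < n + 1),
      (σ ⟨A.length + 1 + C.length + 1 + q, hq'⟩).val = B[q] := by
    intro q hq hq'
    have h1 : (word σ)[A.length + 1 + C.length + 1 + q]? = some B[q] := by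
      have h2 : A ++ 0 :: (C ++ n :: B) = (A ++ 0 :: (C ++ [n])) ++ B := by simp
      rw [h, h2, List.getElem?_append_right (by simp; omega)]
      rw [List.getElem?_eq_getElem (by simp; omega)]
      congr 2
      simp
      omega
    simp only [word, List.getElem?_ofFn, hq', dif_pos] at h1
    exact Option.some.inj h1
  have hbσ : σ ⟨A.length + 1 + C.length, by omega⟩ = Fin.last n := by
    rw [← Equiv.eq_symm_apply]
    exact Fin.ext hb.symm
  refine and_congr ?_ ?_
  · unfold runOf
    rw [ha, hb, runIdx_eq_iff σ (by omega)]
    have hM : C.Pairwise (· < ·) ↔ (0 :: (C ++ [n])).Pairwise (· < ·) := by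
      have hlt : ∀ x ∈ C, 0 < x ∧ x < n := by
        intro x hx
        have h1 : x < n + 1 := List.mem_range.1 (hperm.mem_iff.1 (by simp [hx]))
        have h2 := hd.of_append_right
        have h3 := List.nodup_cons.1 h2
        have h4 : x ≠ 0 := by rintro rfl; exact h3.1 (by simp [hx])
        have h5 : x ≠ n := fun e => (List.nodup_append.1 h3.2).2.2 x hx n (by simp) e
        omega
      have hn : 0 < n := by
        refine Nat.pos_of_ne_zero fun e => ?_
        exact (List.nodup_cons.1 hd.of_append_right).1 (by simp [e])
      constructor
      · intro hC
        refine List.pairwise_cons.2 ⟨fun x hx => ?_, List.pairwise_append.2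
          ⟨hC, List.pairwise_singleton _ _, fun x hx y hy => ?_⟩⟩
        · rcases List.mem_append.1 hx with hx | hx
          · exact (hlt x hx).1
          · rwa [List.mem_singleton.1 hx]
        · rw [List.mem_singleton.1 hy]
          exact (hlt x hx).2
      · intro hM
        exact (List.pairwise_append.1 (List.pairwise_cons.1 hM).2).1
    rw [hM, List.pairwise_iff_getElem]
    have hlM : (0 :: (C ++ [n])).length = C.length + 2 := by simp
    have hW : A ++ 0 :: (C ++ n :: B) = A ++ ((0 :: (C ++ [n])) ++ B) := by simp
    have hWlen : (A ++ ((0 :: (C ++ [n])) ++ B)).length = n + 1 := by simp; omega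
    have hget : ∀ i (hi : i < (0 :: (C ++ [n])).length),
        (A ++ ((0 :: (C ++ [n])) ++ B))[A.length + i]'(by omega) = (0 :: (C ++ [n]))[i] := by
      intro i hi
      rw [List.getElem_append_right (by omega), List.getElem_append_left (by simpa using hi)]
      congr 1
      omega
    simp only [descB_eq_false_iff σ (h.trans hW)]
    constructor
    · intro hasc i j hi hj hij
      have := lt_of_ascents (l := A ++ ((0 :: (C ++ [n])) ++ B)) (a := A.length + i)
        (b := A.length + j) (by omega) (by omega)
        (fun k hk hk' hk2 => hasc k (by omega) (by omega) hk2)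
      rwa [hget i hi, hget j hj] at this
    · intro hs j hj hj' hj2
      obtain ⟨i, rfl⟩ := Nat.exists_eq_add_of_le hj
      have := hs i (i + 1) (by omega) (by omega) (by omega)
      rwa [← hget i (by omega), ← hget (i + 1) (by omega)] at this
  · rw [hb]
    constructor
    · intro hσ q hq hmin
      have hq' : A.length + 1 + C.length + 1 + q < n + 1 := by omega
      have h1 := hσ ⟨A.length + 1 + C.length + 1 + q, hq'⟩ (by simp; omega) (by
        rintro ⟨j, hjn⟩ hj hj'
        obtain ⟨i, rfl⟩ : ∃ i, j = A.length + 1 + C.length + 1 + i :=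
          Nat.exists_eq_add_of_le (Nat.succ_le_of_lt hj)
        simp only at hj'
        rw [Fin.lt_def, hB q hq hq', hB i (by omega)]
        exact hmin i (by omega))
      -- a left-to-right minimum after the largest letter always starts a run
      have hstart : startsB σ (A.length + 1 + C.length + 1 + q) = true := by
        simp only [startsB, Bool.or_eq_true]
        right
        simp only [descB]
        rw [dif_pos (by omega)]
        rw [decide_eq_true_eq]
        obtain _ | q := q
        · have h2 : σ ⟨A.length + 1 + C.length + 1 + 0, hq'⟩ ≠
              σ ⟨A.length + 1 + C.length, by omega⟩ := fun e => by simpa using σ.injective e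
          rw [hbσ] at h2
          have h3 := lt_of_le_of_ne (Fin.le_last _) h2
          rw [← hbσ] at h3
          exact h3
        · have h2 := hmin q (by omega)
          rw [← hB q (by omega) (by omega), ← hB (q + 1) hq hq'] at h2
          exact h2
      have hend : ¬ endsB σ (A.length + 1 + C.length + 1 + q) = true := fun h2 => h1 ⟨hstart, h2⟩
      simp only [endsB, Bool.or_eq_true, not_or, beq_iff_eq, Bool.not_eq_true] at hend
      have hq2 : q + 1 < B.length := by omega
      refine ⟨hq2, ?_⟩
      have h3 := (descB_eq_false_iff σ rfl _).1 hend.2 (by simp [word]; omega)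
      simp only [word, List.getElem_ofFn] at h3
      rw [hB q hq] at h3
      rw [← hB (q + 1) hq2 (by omega)]
      exact h3
    · rintro hg ⟨p, hpn⟩ hp hmin ⟨-, hend⟩
      obtain ⟨q, rfl⟩ : ∃ q, p = A.length + 1 + C.length + 1 + q :=
        Nat.exists_eq_add_of_le (Nat.succ_le_of_lt hp)
      have hqB : q < B.length := by omega
      obtain ⟨hq2, h2⟩ := hg q hqB (by
        intro j hj
        have := hmin ⟨A.length + 1 + C.length + 1 + j, by omega⟩ (by simp; omega) (by simpa)
        rwa [Fin.lt_def, hB q hqB, hB j (by omega)] at this)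
      rw [← hB q hqB (by omega), ← hB (q + 1) hq2 (by omega)] at h2
      simp only [endsB, Bool.or_eq_true, beq_iff_eq] at hend
      rcases hend with h3 | h3
      · omega
      · simp only [descB] at h3
        rw [dif_pos (by omega), decide_eq_true_eq] at h3
        exact absurd h2 (not_lt.2 h3.le)

lemma cond_iff {n : ℕ} (hn : 0 < n) (σ : Equiv.Perm (Fin (n + 1))) :
    Cond σ ↔ Admissible n (word σ) := by
  have hd := (word_perm σ).nodup_iff.2 List.nodup_range
  have h0 : 0 ∈ word σ := (word_perm σ).mem_iff.2 (by simp)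
  have hnm : n ∈ word σ := (word_perm σ).mem_iff.2 (by simp)
  obtain ⟨A, w, hw⟩ := List.append_of_mem h0
  rw [hw] at hnm hd
  have hw0 : 0 ∉ w := (List.nodup_cons.1 hd.of_append_right).1
  have hA0 : 0 ∉ A := fun h0 => (List.nodup_append.1 hd).2.2 0 h0 0 (by simp) rfl
  rcases List.mem_append.1 hnm with hnA | hnw
  · -- the largest letter precedes the smallest one: both sides are false
    refine iff_of_false ?_ ?_
    · rintro ⟨hrun, -⟩
      obtain ⟨P, Q, rfl⟩ := List.append_of_mem hnA
      have ha : (σ.symm 0).val = (P ++ n :: Q).length := symm_eq σ (v := 0) hw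
      have hb : (σ.symm (Fin.last n)).val = P.length :=
        symm_eq σ (v := Fin.last n) (Q := Q ++ 0 :: w) (by rw [hw]; simp)
      unfold runOf at hrun
      rw [ha, hb, eq_comm, runIdx_eq_iff σ (by simp)] at hrun
      simp only [descB_eq_false_iff σ hw] at hrun
      have := lt_of_ascents (by simp) (by simp) hrun
      simp at this
    · rintro ⟨A', C, B, h1, -, -⟩
      rw [hw] at h1
      obtain ⟨-, -, rfl⟩ := (List.append_cons_inj_of_notMem hA0 hw0).1 h1
      exact (List.nodup_append.1 hd).2.2 n hnA n (by simp) rfl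
  · have hnw : n ∈ w := (List.mem_cons.1 hnw).resolve_left hn.ne'
    obtain ⟨C, B, rfl⟩ := List.append_of_mem hnw
    rw [cond_iff_of_word σ hw]
    constructor
    · rintro ⟨hC, hB⟩
      exact ⟨A, C, B, hw, hC, hB⟩
    · rintro ⟨A', C', B', h1, hC, hB⟩
      rw [hw] at h1
      obtain ⟨-, -, h2⟩ := (List.append_cons_inj_of_notMem hA0 hw0).1 h1
      have hd2 := (List.nodup_cons.1 hd.of_append_right).2
      have hnC : n ∉ C := fun h => (List.nodup_append.1 hd2).2.2 n h n (by simp) rfl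
      have hnB : n ∉ B := (List.nodup_cons.1 hd2.of_append_right).1
      obtain ⟨rfl, -, rfl⟩ := (List.append_cons_inj_of_notMem hnC hnB).1 h2
      exact ⟨hC, hB⟩

end SS

open SS in
/-- The number of permutations of `S_{n+1}` in which `1` and `n+1` lie in the same
maximal increasing run and no left-to-right minimum strictly to the right of `n+1`
forms a singleton run, equals `n!`. -/
theorem stmt14 (n : ℕ) :
    ((Finset.univ : Finset (Equiv.Perm (Fin (n + 1)))).filter (fun σ =>
        runOf σ (0 : Fin (n + 1)) = runOf σ (Fin.last n) ∧
        ∀ p : Fin (n + 1), (σ.symm (Fin.last n)).val < p.val →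
          (∀ j : Fin (n + 1), (σ.symm (Fin.last n)).val < j.val → j.val < p.val → σ p < σ j) →
          ¬ (startsB σ p.val = true ∧ endsB σ p.val = true))).card
      = n.factorial := by
  classical
  rcases Nat.eq_zero_or_pos n with rfl | hn
  · rw [Finset.filter_true_of_mem]
    · simp
    · intro σ _
      refine ⟨rfl, fun p hp => ?_⟩
      omega
  · rw [← card_admissible n hn]
    refine Finset.card_bij (fun σ _ => word σ) ?_ (fun σ _ τ _ h => word_injective h) ?_
    · intro σ hσ
      have h1 : Cond σ := (Finset.mem_filter.1 hσ).2
      simpa [word_perm σ] using (cond_iff hn σ).1 h1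
    · intro l hl
      simp only [Finset.mem_filter, List.mem_toFinset, List.mem_permutations] at hl
      obtain ⟨σ, rfl⟩ := exists_word hl.1
      exact ⟨σ, Finset.mem_filter.2 ⟨Finset.mem_univ _, (cond_iff hn σ).2 hl.2⟩, rfl⟩
end

section
/- The generating polynomial Σ_{σ∈S_n} q^{s(σ)} with s(σ) = n − run(σ) + 2·lsg(σ) + rsg(σ) equals the generating polynomial of the major index (equivalently, of the inversion number) over S_n; i.e., s is a Mahonian statistic. -/
/-!
Scan the values `v = 0, 1, …, n-1` of a permutation `σ` in increasing order.  Call a run open at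
time `v` if it has an element `< v` and an element `≥ v`, and let the height `h_v` be the number of
open runs.  Record for each `v` whether it starts its run, whether it ends its run, and
`l_v = lsgAt σ v`.  The open runs other than the run of `v` are exactly those counted by
`lsgAt σ v + rsgAt σ v`.  So the heights follow from the starts and ends, `l_v ≤ h_v` if `v` starts
a run, `l_v < h_v` otherwise, and `n - run + 2 lsg + rsg = ∑ v, (h_v + l_v)` (`total_eq`).  The
record is a labelled Motzkin path from height `0` to height `0`; such records are called codes.

The code determines `σ` (`order_eq`, `code_injective`).  Let `a < v`.  If the run of `a` is open at
time `v`, counting the open runs to its left and comparing with `l_v` locates it relative to the run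
of `v`.  If it is closed and left of the run of `v`, then some open run lies between them (the run
of `v` included, if open), because consecutive runs satisfy `max B_i > min B_(i+1)`
(`exists_open`); so counting open runs decides again.

The codes from height `h` with `m` steps have the generating polynomial
`[m]_q! [m choose h]_q q^(h(h+1)/2)` (`sum_codes`), by induction on `m` with the `q`-Pascal rule.
For `h = 0` this is `[n]_q!`, and at `q = 1` it shows that there are `n!` codes, so the injective map
from permutations to codes is bijective and `n - run + 2 lsg + rsg` has generating polynomial
`[n]_q!` (`sum_mad`).

The same holds for `inv`, by splitting off the last letter (`sum_inv`), and for `maj`: adding `1`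
modulo `n` to all letters lowers `maj` by `1` unless the last letter is the largest one
(`maj_rotate`), and a largest last letter does not affect `maj` (`sum_maj`).
-/

open Finset

namespace SS

/-- The inversion number of `σ`. -/
def inv {n : ℕ} (σ : Equiv.Perm (Fin n)) : ℕ :=
  ((Finset.univ : Finset (Fin n × Fin n)).filter (fun p => p.1 < p.2 ∧ σ p.2 < σ p.1)).card

/-- The major index of `σ` : the sum of the (1-based) positions of the descents. -/
def maj {n : ℕ} (σ : Equiv.Perm (Fin n)) : ℕ :=
  ∑ j ∈ (Finset.range n).filter (fun j => descB σ j = true), (j + 1)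

end SS

namespace SS
namespace Mad

/-! ### Codes and their generating polynomial -/

/-- The `q`-binomial coefficient, defined through the Pascal rule
`[m+1, h+1] = q^(h+1) [m, h+1] + [m, h]`. -/
def qbinom {R : Type*} [CommRing R] (q : R) : ℕ → ℕ → R
  | _, 0 => 1
  | 0, _ + 1 => 0
  | m + 1, h + 1 => q ^ (h + 1) * qbinom q m (h + 1) + qbinom q m h

theorem qint_succ {R : Type*} [CommRing R] (q : R) (m : ℕ) :
    qint q (m + 1) = qint q m + q ^ m := Finset.sum_range_succ _ _

theorem qint_succ' {R : Type*} [CommRing R] (q : R) (m : ℕ) :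
    qint q (m + 1) = 1 + q * qint q m := by
  simp only [qint, Finset.sum_range_succ', Finset.mul_sum]
  simp [pow_succ', add_comm]

@[simp] theorem qbinom_zero_right {R : Type*} [CommRing R] (q : R) (m : ℕ) :
    qbinom q m 0 = 1 := by cases m <;> rfl

/-- The absorption identity `[h+1] [m+1, h+1] = [m+1] [m, h]`. -/
theorem qbinom_absorb {R : Type*} [CommRing R] (q : R) (m h : ℕ) :
    qint q (h + 1) * qbinom q (m + 1) (h + 1) = qint q (m + 1) * qbinom q m h := by
  induction m generalizing h with
  | zero =>
    cases h with
    | zero => simp [qbinom]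
    | succ h => simp [qbinom]
  | succ m ih =>
    cases h with
    | zero =>
      have := ih 0
      have e : qbinom q (m + 2) 1 = q ^ 1 * qbinom q (m + 1) 1 + qbinom q (m + 1) 0 := rfl
      simp only [zero_add, qbinom_zero_right] at this ⊢
      rw [e, qint_succ' q (m + 1)]
      simp only [qbinom_zero_right, pow_one]
      have h1 : qint q 1 = 1 := by simp [qint]
      rw [h1] at this ⊢
      linear_combination q * this
    | succ h =>
      have h1 := ih (h + 1)
      have h2 := ih h
      rw [qbinom, mul_add, mul_left_comm, h1, qint_succ' q (h + 1), qint_succ' q (m + 1),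
        qbinom]
      rw [qbinom] at h2
      rw [qint_succ' q h] at *
      linear_combination q * h2

/-- The data recorded for a value `v` of a permutation: whether `v` starts its run, whether `v`
ends its run, and a natural number (the value of `lsgAt` at `v`). -/
abbrev Step : Type := Σ _ : Bool × Bool, ℕ

/-- The steps available at height `h`, the number of runs currently open: a value starting a run
has at most `h` open runs to its left, a value continuing one of the `h` open runs at most `h - 1`. -/
def steps (h : ℕ) : Finset Step :=
  (Finset.univ : Finset (Bool × Bool)).sigma (fun b => Finset.range (h + b.1.toNat))

/-- The height after a step: it grows when a run starts and drops when a run ends.  The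
subtraction never truncates for a step in `steps h`. -/
def nextHeight (h : ℕ) (w : Step) : ℕ := h + w.1.1.toNat - w.1.2.toNat

/-- The sequences of `m` admissible steps leading from height `h` to height `0`. -/
def codes : ℕ → ℕ → Finset (List Step)
  | 0, h => if h = 0 then {[]} else ∅
  | m + 1, h => (steps h).biUnion (fun w => (codes m (nextHeight h w)).image (List.cons w))

/-- The weight of a sequence of steps starting at height `h`: the sum over all steps of the
current height and the number recorded in the step. -/
def wt : ℕ → List Step → ℕ
  | _, [] => 0
  | h, w :: L => (h + w.2) + wt (nextHeight h w) L

theorem sum_codes_succ {R : Type*} [CommRing R] (q : R) (m h : ℕ) :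
    ∑ L ∈ codes (m + 1) h, q ^ wt h L =
      ∑ w ∈ steps h, q ^ (h + w.2) * ∑ L ∈ codes m (nextHeight h w), q ^ wt (nextHeight h w) L := by
  rw [codes, Finset.sum_biUnion]
  · refine Finset.sum_congr rfl fun w _ => ?_
    rw [Finset.sum_image (by intro a _ b _ hab; exact (List.cons.inj hab).2), Finset.mul_sum]
    exact Finset.sum_congr rfl fun L _ => by rw [wt, pow_add]
  · intro w _ w' _ hne
    rw [Function.onFun, Finset.disjoint_left]
    intro L h1 h2
    obtain ⟨a, _, rfl⟩ := Finset.mem_image.1 h1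
    obtain ⟨b, _, hb⟩ := Finset.mem_image.1 h2
    exact hne (List.cons.inj hb).1.symm

/-- Closed form of the generating polynomial of `codes m h`.  One step at height `h` contributes
`q^h [h+1]` for the two kinds of values starting a run and `q^h [h]` for the two other kinds.  The
Pascal rule sums the two kinds within each pair; absorption turns the result into a multiple of
the Pascal rule again. -/
theorem sum_codes {R : Type*} [CommRing R] (q : R) (m h : ℕ) :
    ∑ L ∈ codes m h, q ^ wt h L =
      qfact q m * qbinom q m h * q ^ (∑ i ∈ Finset.range (h + 1), i) := by
  induction m generalizing h with
  | zero =>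
    cases h with
    | zero => simp [codes, wt, qfact]
    | succ h => simp [codes, qbinom]
  | succ m ih =>
    have hq : ∀ k, ∑ l ∈ Finset.range k, q ^ (h + l) = q ^ h * qint q k := fun k => by
      simp only [qint, Finset.mul_sum, pow_add]
    have hf : qfact q (m + 1) = qfact q m * qint q (m + 1) := Finset.prod_range_succ _ _
    rw [sum_codes_succ, steps, Finset.sum_sigma, Fintype.sum_prod_type]
    simp only [nextHeight, ih, Fintype.sum_bool, ← Finset.sum_mul, hq, Bool.toNat_true,
      Bool.toNat_false, add_zero, Nat.add_sub_cancel, Nat.sub_zero, hf]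
    cases h with
    | zero =>
      have h1 := qbinom_absorb q m 0
      simp [qbinom, qint, Finset.sum_range_succ] at h1 ⊢
      linear_combination qfact q m * h1
    | succ h =>
      have h1 := qbinom_absorb q m (h + 1)
      have h2 := qbinom_absorb q m h
      simp only [qbinom] at h1 h2 ⊢
      simp only [Nat.add_sub_cancel, Finset.sum_range_succ _ (h + 2), Finset.sum_range_succ _ (h + 1)]
      simp only [pow_add]
      simp only [pow_add, pow_one] at h1 h2
      linear_combination (qfact q m * q ^ (∑ i ∈ Finset.range (h + 1), i) * q ^ h * q) *
        (q ^ h * q * h1 + h2)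

/-- The specialization `q = 1` of `sum_codes`. -/
theorem card_codes (m : ℕ) : (codes m 0).card = m.factorial := by
  have := sum_codes (1 : ℤ) m 0
  simp [qfact, qint] at this
  have h2 : ((codes m 0).card : ℤ) = ((m.factorial : ℕ) : ℤ) := by
    rw [this, ← Finset.prod_range_add_one_eq_factorial]; push_cast; rfl
  exact_mod_cast h2

/-- A sequence of steps compatible with a sequence `H` of heights is a code, of the expected
weight. -/
theorem mem_codes {n : ℕ} (H : ℕ → ℕ) (f : Fin n → Step) (h0 : H n = 0)
    (hlt : ∀ v, (f v).2 < H v + (f v).1.1.toNat)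
    (hs : ∀ v : Fin n, H (v + 1) + (f v).1.2.toNat = H v + (f v).1.1.toNat) :
    List.ofFn f ∈ codes n (H 0) ∧ wt (H 0) (List.ofFn f) = ∑ v : Fin n, (H v + (f v).2) := by
  induction n generalizing H with
  | zero => simp [codes, h0, wt]
  | succ n ih =>
    have hn : nextHeight (H 0) (f 0) = H 1 := by
      have := hs 0
      simp only [nextHeight, Fin.val_zero, zero_add] at this ⊢
      omega
    obtain ⟨h1, h2⟩ := ih (fun k => H (k + 1)) (fun v => f v.succ) h0
      (fun v => by simpa using hlt v.succ) (fun v => by simpa using hs v.succ)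
    rw [List.ofFn_succ, Fin.sum_univ_succ, codes, wt, hn]
    refine ⟨?_, by rw [h2]; simp⟩
    refine Finset.mem_biUnion.2 ⟨f 0, ?_, ?_⟩
    · have := hlt 0
      simpa [steps] using this
    · rw [hn]; exact Finset.mem_image_of_mem _ h1

/-! ### Functions assigning run indices to values -/

/-- The values `0, …, n-1` are distributed by `r` over `N` nonempty blocks in such a way that
each block has an element exceeding some element of the following block.  These are the functions
`runOf σ`. -/
structure IsRuns {n : ℕ} (r : Fin n → ℕ) (N : ℕ) : Prop where
  lt : ∀ v, r v < N
  surj : ∀ R < N, ∃ v, r v = R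
  desc : ∀ R, R + 1 < N → ∃ a b, r a = R ∧ r b = R + 1 ∧ b < a

/-- `v` is the least element of its block. -/
def IsMin {n : ℕ} (r : Fin n → ℕ) (v : Fin n) : Prop := ∀ u, r u = r v → v ≤ u
/-- `v` is the greatest element of its block. -/
def IsMax {n : ℕ} (r : Fin n → ℕ) (v : Fin n) : Prop := ∀ u, r u = r v → u ≤ v

/-- Block `R` is open at time `k`: it has an element `< k` and an element `≥ k`. -/
def OpenAt {n : ℕ} (r : Fin n → ℕ) (k R : ℕ) : Prop :=
  (∃ a, r a = R ∧ a.val < k) ∧ ∃ b, r b = R ∧ k ≤ b.val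

open Classical in
/-- The number of blocks with index `< ρ` that are open at time `k`. -/
noncomputable def openCard {n : ℕ} (r : Fin n → ℕ) (k ρ : ℕ) : ℕ :=
  ((Finset.range ρ).filter (OpenAt r k)).card

section Runs

variable {n : ℕ} {r : Fin n → ℕ} {N : ℕ}

theorem openCard_mono (k : ℕ) {ρ ρ' : ℕ} (h : ρ ≤ ρ') : openCard r k ρ ≤ openCard r k ρ' := by
  classical
  exact Finset.card_le_card (Finset.filter_subset_filter _ (Finset.range_mono h))

theorem openCard_lt {k ρ ρ' R : ℕ} (hR : OpenAt r k R) (h1 : ρ ≤ R) (h2 : R < ρ') :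
    openCard r k ρ < openCard r k ρ' := by
  classical
  refine Finset.card_lt_card ⟨Finset.filter_subset_filter _ (Finset.range_mono (by omega)), ?_⟩
  intro hs
  have := hs (Finset.mem_filter.2 ⟨Finset.mem_range.2 h2, hR⟩)
  simp at this
  omega

theorem openCard_succ (k ρ : ℕ) [Decidable (OpenAt r k ρ)] :
    openCard r k (ρ + 1) = openCard r k ρ + if OpenAt r k ρ then 1 else 0 := by
  classical
  rw [openCard, openCard, Finset.range_add_one, Finset.filter_insert]
  split_ifs with h
  · rw [Finset.card_insert_of_notMem (by simp)]
  · rfl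

theorem exists_isMin (a : Fin n) : ∃ b, r b = r a ∧ b ≤ a ∧ IsMin r b := by
  classical
  have hne : ((Finset.univ : Finset (Fin n)).filter (fun u => r u = r a)).Nonempty := ⟨a, by simp⟩
  obtain ⟨b, hb, hmin⟩ := Finset.exists_min_image _ id hne
  simp only [Finset.mem_filter, Finset.mem_univ, true_and, id] at hb hmin
  exact ⟨b, hb, hmin a rfl, fun u hu => hmin u (hu.trans hb)⟩

theorem exists_isMax (a : Fin n) : ∃ b, r b = r a ∧ a ≤ b ∧ IsMax r b := by
  classical
  have hne : ((Finset.univ : Finset (Fin n)).filter (fun u => r u = r a)).Nonempty := ⟨a, by simp⟩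
  obtain ⟨b, hb, hmax⟩ := Finset.exists_max_image _ id hne
  simp only [Finset.mem_filter, Finset.mem_univ, true_and, id] at hb hmax
  exact ⟨b, hb, hmax a rfl, fun u hu => hmax u (hu.trans hb)⟩

/-- The block of `v` is open when `v` arrives unless `v` is its first element. -/
theorem open_self (v : Fin n) : OpenAt r v (r v) ↔ ¬ IsMin r v := by
  constructor
  · rintro ⟨⟨a, ha, hav⟩, -⟩ hm
    exact absurd (hm a ha) (not_le.2 hav)
  · intro hm
    simp only [IsMin, not_forall, not_le] at hm
    obtain ⟨u, hu, huv⟩ := hm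
    exact ⟨⟨u, hu, huv⟩, v, rfl, le_rfl⟩

theorem open_succ_self (v : Fin n) : OpenAt r (v + 1) (r v) ↔ ¬ IsMax r v := by
  constructor
  · rintro ⟨-, b, hb, hvb⟩ hm
    have := hm b hb
    rw [Fin.le_def] at this
    omega
  · intro hm
    simp only [IsMax, not_forall, not_le] at hm
    obtain ⟨u, hu, huv⟩ := hm
    exact ⟨⟨v, rfl, by omega⟩, u, hu, huv⟩

theorem open_of_ne {v : Fin n} {R : ℕ} (hR : R ≠ r v) :
    OpenAt r v R ↔ (∃ a, r a = R ∧ a < v) ∧ ∃ b, r b = R ∧ v < b := by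
  constructor
  · rintro ⟨⟨a, ha, hav⟩, b, hb, hvb⟩
    refine ⟨⟨a, ha, hav⟩, b, hb, lt_of_le_of_ne hvb ?_⟩
    rintro rfl
    exact hR hb.symm
  · rintro ⟨⟨a, ha, hav⟩, b, hb, hvb⟩
    exact ⟨⟨a, ha, hav⟩, b, hb, hvb.le⟩

theorem open_succ_of_ne {v : Fin n} {R : ℕ} (hR : R ≠ r v) :
    OpenAt r (v + 1) R ↔ (∃ a, r a = R ∧ a < v) ∧ ∃ b, r b = R ∧ v < b := by
  constructor
  · rintro ⟨⟨a, ha, hav⟩, b, hb, hvb⟩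
    refine ⟨⟨a, ha, lt_of_le_of_ne (Nat.lt_succ_iff.1 hav) ?_⟩, b, hb, hvb⟩
    rintro rfl
    exact hR ha.symm
  · rintro ⟨⟨a, ha, hav⟩, b, hb, hvb⟩
    exact ⟨⟨a, ha, Nat.lt_succ_of_lt hav⟩, b, hb, hvb⟩

/-- Whether the block of `a < v` is open at time `v` is visible from the values below `v` and the
knowledge of which of them are block maxima. -/
theorem open_iff_of_lt {v a : Fin n} (hav : a < v) :
    OpenAt r v (r a) ↔ ∀ c < v, r c = r a → ¬ IsMax r c := by
  constructor
  · rintro ⟨-, b, hb, hvb⟩ c hcv hc hm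
    exact absurd (hm b (hb.trans hc.symm)) (not_le.2 (lt_of_lt_of_le hcv hvb))
  · intro h
    obtain ⟨b, hb, -, hm⟩ := exists_isMax (r := r) a
    refine ⟨⟨a, rfl, hav⟩, b, hb, ?_⟩
    by_contra hlt
    exact h b (not_le.1 hlt) hb hm

open Classical in
/-- The number of open blocks to the left of the block of `a`, expressed through values below `v`
only: each open block is represented by its minimum. -/
theorem openCard_eq (v a : Fin n) :
    openCard r v (r a) = ((Finset.univ : Finset (Fin n)).filter (fun b => b < v ∧ IsMin r b ∧
      r b < r a ∧ ∀ c < v, r c = r b → ¬ IsMax r c)).card := by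
  symm
  refine Finset.card_bij (fun b _ => r b) ?_ ?_ ?_
  · intro b hb
    simp only [Finset.mem_filter, Finset.mem_univ, true_and, Finset.mem_range] at hb ⊢
    exact ⟨hb.2.2.1, (open_iff_of_lt hb.1).2 hb.2.2.2⟩
  · intro b hb c hc hbc
    simp only [Finset.mem_filter, Finset.mem_univ, true_and] at hb hc
    exact le_antisymm (hb.2.1 c hbc.symm) (hc.2.1 b hbc)
  · intro R hR
    simp only [Finset.mem_filter, Finset.mem_range] at hR
    obtain ⟨hRa, ho⟩ := hR
    obtain ⟨⟨c, rfl, hcv⟩, -⟩ := id ho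
    obtain ⟨b, hb, hbc, hm⟩ := exists_isMin (r := r) c
    have hbv : b < v := lt_of_le_of_lt hbc hcv
    rw [← hb] at ho hRa
    exact ⟨b, by simpa using ⟨hbv, hm, hRa, (open_iff_of_lt hbv).1 ho⟩, hb⟩

/-- If the block of `a` is closed at time `v` and lies left of the block of `v`, then some open
block lies strictly right of the former and weakly left of the latter.  Indeed the first block right
of that of `a` reaching `v` follows a block all of whose elements are below `v`, so `IsRuns.desc`
gives it an element below `v`. -/
theorem exists_open (hr : IsRuns r N) {a v : Fin n} (hcl : ¬ OpenAt r v (r a)) (hav : a < v)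
    (h : r a < r v) : ∃ R, OpenAt r v R ∧ r a ≤ R ∧ R < r v + 1 := by
  classical
  -- The first block right of that of `a` having an element `≥ v`.
  have hex : ∃ R, r a < R ∧ ∃ b, r b = R ∧ v ≤ b := ⟨r v, h, v, rfl, le_rfl⟩
  obtain ⟨hR1, hR2⟩ := Nat.find_spec hex
  have hmin : ∀ m < Nat.find hex, ¬ _ := fun m hm => Nat.find_min hex hm
  have hle : Nat.find hex ≤ r v := Nat.find_min' hex ⟨h, v, rfl, le_rfl⟩
  generalize Nat.find hex = R at *
  refine ⟨R, ⟨?_, hR2⟩, hR1.le, by omega⟩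
  obtain ⟨S, rfl⟩ : ∃ S, R = S + 1 := ⟨R - 1, by omega⟩
  obtain ⟨c, d, hc, hd, hdc⟩ := hr.desc S (lt_of_le_of_lt hle (hr.lt v))
  refine ⟨d, hd, lt_trans hdc ?_⟩
  by_contra hvc
  rcases Nat.lt_or_ge (r a) S with hlt | hge
  · exact hmin S (by omega) ⟨hlt, c, hc, not_lt.1 hvc⟩
  · have : S = r a := by omega
    exact hcl ⟨⟨a, rfl, hav⟩, c, hc.trans this, not_lt.1 hvc⟩

theorem lt_iff_of_open {a v : Fin n} (ho : OpenAt r v (r a)) :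
    r a < r v ↔ openCard r v (r a) < openCard r v (r v) := by
  constructor
  · exact fun h => openCard_lt ho le_rfl h
  · intro h
    by_contra hn
    exact absurd (openCard_mono (r := r) v (not_lt.1 hn)) (not_le.2 h)

open Classical in
theorem lt_iff_of_not_open (hr : IsRuns r N) {a v : Fin n} (hav : a < v)
    (ho : ¬ OpenAt r v (r a)) :
    r a < r v ↔ openCard r v (r a) < openCard r v (r v) + if IsMin r v then 0 else 1 := by
  have hs := openCard_succ (r := r) v (r v)
  have : (if OpenAt r v (r v) then 1 else 0) = if IsMin r v then 0 else 1 := by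
    simp [open_self]
  rw [← this, ← hs]
  constructor
  · intro h
    obtain ⟨R, hR, h1, h2⟩ := exists_open hr ho hav h
    exact openCard_lt hR h1 h2
  · intro h
    have h1 : r a < r v + 1 := by
      by_contra hn
      exact absurd (openCard_mono (r := r) v (not_lt.1 hn)) (not_le.2 h)
    refine lt_of_le_of_ne (Nat.lt_succ_iff.1 h1) fun heq => ho ?_
    exact ⟨⟨a, rfl, hav⟩, v, heq.symm, le_rfl⟩

theorem eq_iff {a v : Fin n} (hav : a < v) :
    r a = r v ↔ ¬ IsMin r v ∧ OpenAt r v (r a) ∧ openCard r v (r a) = openCard r v (r v) := by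
  constructor
  · intro h
    have : OpenAt r v (r a) := ⟨⟨a, rfl, hav⟩, v, h.symm, le_rfl⟩
    exact ⟨(open_self v).1 (h ▸ this), this, by rw [h]⟩
  · rintro ⟨hm, ho, hc⟩
    rcases lt_trichotomy (r a) (r v) with h | h | h
    · exact absurd hc ((lt_iff_of_open ho).1 h).ne
    · exact h
    · exact absurd hc (openCard_lt ((open_self v).2 hm) le_rfl h).ne.symm

/-- The block minima, the block maxima and the numbers of open blocks to the left of each value
determine the relative order of the blocks.  The values are inserted one by one, in increasing
order: the position of the block of `v` relative to the earlier values is forced. -/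
theorem order_eq {r' : Fin n → ℕ} {N' : ℕ} (hr : IsRuns r N) (hr' : IsRuns r' N')
    (hmin : ∀ v, IsMin r v ↔ IsMin r' v) (hmax : ∀ v, IsMax r v ↔ IsMax r' v)
    (hl : ∀ v : Fin n, openCard r v (r v) = openCard r' v (r' v)) (k : ℕ) :
    ∀ a b : Fin n, a.val < k → b.val < k → (r a < r b ↔ r' a < r' b) := by
  classical
  induction k with
  | zero => intro a b ha; omega
  | succ k ih =>
    have key : ∀ a v : Fin n, v.val = k → a < v →
        ((r a < r v ↔ r' a < r' v) ∧ (r a = r v ↔ r' a = r' v)) := by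
      intro a v hv hav
      subst hv
      have heq : ∀ a b : Fin n, a < v → b < v → (r a = r b ↔ r' a = r' b) := by
        intro a b ha hb
        have h1 := ih a b ha hb
        have h2 := ih b a hb ha
        omega
      have hopen : OpenAt r v (r a) ↔ OpenAt r' v (r' a) := by
        rw [open_iff_of_lt hav, open_iff_of_lt hav]
        refine forall_congr' fun c => forall_congr' fun hc => ?_
        rw [heq c a hc hav, hmax]
      have hcard : openCard r v (r a) = openCard r' v (r' a) := by
        rw [openCard_eq, openCard_eq]
        congr 1
        refine Finset.filter_congr fun b _ => ?_
        refine and_congr_right fun hb => ?_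
        rw [hmin b, ih b a hb hav]
        refine and_congr_right fun _ => and_congr_right fun _ => ?_
        refine forall_congr' fun c => forall_congr' fun hc => ?_
        rw [heq c b hc hb, hmax]
      constructor
      · by_cases ho : OpenAt r v (r a)
        · rw [lt_iff_of_open ho, lt_iff_of_open (hopen.1 ho), hcard, hl]
        · rw [lt_iff_of_not_open hr hav ho, lt_iff_of_not_open hr' hav (mt hopen.2 ho), hcard, hl]
          simp only [hmin]
      · rw [eq_iff hav, eq_iff hav, hopen, hcard, hl, hmin]
    intro a b ha hb
    rcases lt_trichotomy a b with hab | rfl | hab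
    · rcases Nat.lt_succ_iff_lt_or_eq.1 hb with hb | hb
      · exact ih a b (lt_trans hab hb) hb
      · exact (key a b hb hab).1
    · simp
    · rcases Nat.lt_succ_iff_lt_or_eq.1 ha with ha | ha
      · exact ih a b ha (lt_trans hab ha)
      · have := key b a ha hab
        omega

/-! ### Heights and covering numbers -/

open Classical in
/-- The number of blocks left of that of `v` having elements on both sides of `v`. -/
noncomputable def leftCover (r : Fin n → ℕ) (N : ℕ) (v : Fin n) : ℕ :=
  ((Finset.range N).filter (fun R => R < r v ∧
      (∃ a : Fin n, r a = R ∧ a < v) ∧ (∃ b : Fin n, r b = R ∧ v < b))).card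

open Classical in
/-- The number of blocks right of that of `v` having elements on both sides of `v`. -/
noncomputable def rightCover (r : Fin n → ℕ) (N : ℕ) (v : Fin n) : ℕ :=
  ((Finset.range N).filter (fun R => r v < R ∧
      (∃ a : Fin n, r a = R ∧ a < v) ∧ (∃ b : Fin n, r b = R ∧ v < b))).card

theorem leftCover_eq (hr : IsRuns r N) (v : Fin n) : leftCover r N v = openCard r v (r v) := by
  classical
  rw [leftCover, openCard]
  congr 1
  ext R
  simp only [Finset.mem_filter, Finset.mem_range]
  have := hr.lt v
  constructor
  · rintro ⟨-, h1, h2⟩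
    exact ⟨h1, (open_of_ne h1.ne).2 h2⟩
  · rintro ⟨h1, h2⟩
    exact ⟨by omega, h1, (open_of_ne h1.ne).1 h2⟩

/-- Away from the block of `v`, being open at time `v` or at time `v + 1` both mean having elements
on both sides of `v`; the property `P` stands for either one. -/
theorem card_split (hr : IsRuns r N) (v : Fin n) (P : ℕ → Prop) [DecidablePred P]
    (hP : ∀ R, R ≠ r v → (P R ↔ (∃ a, r a = R ∧ a < v) ∧ ∃ b, r b = R ∧ v < b)) :
    ((Finset.range N).filter P).card =
      leftCover r N v + rightCover r N v + if P (r v) then 1 else 0 := by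
  classical
  have hsub : ((Finset.range N).filter P).card =
      (((Finset.range N).filter P).erase (r v)).card + if P (r v) then 1 else 0 := by
    split_ifs with h
    · rw [Finset.card_erase_add_one]
      simpa using ⟨hr.lt v, h⟩
    · rw [Finset.erase_eq_of_notMem (by simp [h]), add_zero]
  rw [hsub, leftCover, rightCover, ← Finset.card_union_of_disjoint]
  · congr 2
    ext R
    simp only [Finset.mem_erase, Finset.mem_union, Finset.mem_filter, Finset.mem_range]
    constructor
    · rintro ⟨h1, h2, h3⟩
      rcases lt_or_gt_of_ne h1 with h | h
      · exact Or.inl ⟨h2, h, (hP R h1).1 h3⟩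
      · exact Or.inr ⟨h2, h, (hP R h1).1 h3⟩
    · rintro (⟨h1, h2, h3⟩ | ⟨h1, h2, h3⟩)
      · exact ⟨h2.ne, h1, (hP R h2.ne).2 h3⟩
      · exact ⟨h2.ne', h1, (hP R h2.ne').2 h3⟩
  · rw [Finset.disjoint_left]
    intro R h1 h2
    simp only [Finset.mem_filter] at h1 h2
    omega

open Classical in
theorem height_eq (hr : IsRuns r N) (v : Fin n) :
    openCard r v N = leftCover r N v + rightCover r N v + if IsMin r v then 0 else 1 := by
  have h := card_split hr v (OpenAt r v) (fun R hR => open_of_ne hR)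
  simp only [open_self, ite_not] at h
  exact h

open Classical in
theorem height_succ_eq (hr : IsRuns r N) (v : Fin n) :
    openCard r (v + 1) N = leftCover r N v + rightCover r N v + if IsMax r v then 0 else 1 := by
  have h := card_split hr v (OpenAt r (v + 1)) (fun R hR => open_succ_of_ne hR)
  simp only [open_succ_self, ite_not] at h
  exact h

theorem height_zero : openCard r 0 N = 0 := by
  classical
  simp [openCard, OpenAt]

theorem height_last : openCard r n N = 0 := by
  classical
  rw [openCard, Finset.card_eq_zero, Finset.filter_eq_empty_iff]
  rintro R - ⟨-, b, -, hb⟩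
  exact absurd b.isLt (not_lt.2 hb)

open Classical in
/-- There are as many block minima as blocks. -/
theorem card_isMin (hr : IsRuns r N) :
    ((Finset.univ : Finset (Fin n)).filter (IsMin r)).card = N := by
  rw [← Finset.card_range N]
  refine Finset.card_bij (fun b _ => r b) ?_ ?_ ?_
  · intro b _
    simpa using hr.lt b
  · intro b hb c hc hbc
    simp only [Finset.mem_filter, Finset.mem_univ, true_and] at hb hc
    exact le_antisymm (hb c hbc.symm) (hc b hbc)
  · intro R hR
    obtain ⟨a, rfl⟩ := hr.surj R (Finset.mem_range.1 hR)
    obtain ⟨b, hb, -, hm⟩ := exists_isMin (r := r) a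
    exact ⟨b, by simpa using hm, hb⟩

open Classical in
/-- The statistic `n - run + 2 lsg + rsg` is the sum over all values of the height and the left
covering number.  A value contributes `1` to `n - run` exactly when it does not start its run, that
is, when its own run counts in the height. -/
theorem total_eq (hr : IsRuns r N) :
    n - N + 2 * ∑ v, leftCover r N v + ∑ v, rightCover r N v =
      ∑ v : Fin n, (openCard r v N + leftCover r N v) := by
  have h1 : ∑ v : Fin n, (if IsMin r v then 1 else 0) = N := by
    rw [← card_isMin hr, Finset.card_filter]
  have h2 : (∑ v : Fin n, if IsMin r v then 0 else 1) + N = n := by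
    rw [← h1, ← Finset.sum_add_distrib]
    have : ∀ v : Fin n, ((if IsMin r v then 0 else 1) + if IsMin r v then 1 else 0) = 1 := by
      intro v; split_ifs <;> rfl
    simp [this]
  simp only [height_eq hr, Finset.sum_add_distrib]
  omega

end Runs

/-! ### The code of a permutation -/

section Perms

variable {n : ℕ}

theorem runIdx_succ (σ : Equiv.Perm (Fin n)) (p : ℕ) :
    runIdx σ (p + 1) = runIdx σ p + if descB σ p = true then 1 else 0 := by
  rw [runIdx, runIdx, Finset.range_add_one, Finset.filter_insert]
  split_ifs with h
  · rw [Finset.card_insert_of_notMem (by simp)]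
  · rfl

theorem runIdx_mono (σ : Equiv.Perm (Fin n)) : Monotone (runIdx σ) :=
  monotone_nat_of_le_succ fun p => by rw [runIdx_succ]; omega

theorem descB_iff (σ : Equiv.Perm (Fin n)) {j : ℕ} (h : j + 1 < n) :
    descB σ j = true ↔ σ ⟨j + 1, h⟩ < σ ⟨j, Nat.lt_of_succ_lt h⟩ := by
  simp [descB, h]

theorem descB_last (σ : Equiv.Perm (Fin n)) {j : ℕ} (h : n ≤ j + 1) :
    descB σ j = false := by
  simp [descB, not_lt.2 h]

theorem run_increasing (σ : Equiv.Perm (Fin n)) (p : Fin n) (q : ℕ) (hpq : p.val ≤ q)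
    (hq : q < n) (h : runIdx σ p = runIdx σ q) : σ p ≤ σ ⟨q, hq⟩ := by
  induction q, hpq using Nat.le_induction with
  | base => exact le_rfl
  | succ q hpq ih =>
    have h1 := runIdx_mono σ hpq
    have h2 := runIdx_succ σ q
    have hd : ¬ descB σ q = true := by
      intro hd
      rw [if_pos hd] at h2
      omega
    rw [if_neg hd] at h2
    rw [descB_iff σ hq, not_lt] at hd
    exact (ih (by omega) (by omega)).trans hd

/-- Positions are ordered lexicographically by run and value. -/
theorem symm_lt_iff (σ : Equiv.Perm (Fin n)) (a b : Fin n) :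
    σ.symm a < σ.symm b ↔ runOf σ a < runOf σ b ∨ runOf σ a = runOf σ b ∧ a < b := by
  have key : ∀ a b : Fin n, σ.symm a < σ.symm b →
      runOf σ a < runOf σ b ∨ runOf σ a = runOf σ b ∧ a < b := by
    intro a b h
    rcases (runIdx_mono σ (Fin.lt_def.1 h).le).lt_or_eq with h1 | h1
    · exact Or.inl h1
    · refine Or.inr ⟨h1, lt_of_le_of_ne ?_ ?_⟩
      · simpa using run_increasing σ (σ.symm a) (σ.symm b) h.le (σ.symm b).isLt h1
      · rintro rfl
        exact lt_irrefl _ h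
  refine ⟨key a b, fun h => ?_⟩
  by_contra hn
  rcases (not_lt.1 hn).lt_or_eq with h1 | h1
  · have := key b a h1
    rcases h with h | ⟨h, h'⟩ <;> rcases this with h2 | ⟨h2, h3⟩
    · omega
    · omega
    · omega
    · exact lt_asymm h' h3
  · have : b = a := σ.symm.injective h1
    subst this
    simp at h

theorem isMin_iff (σ : Equiv.Perm (Fin n)) (v : Fin n) :
    startsB σ (σ.symm v) = true ↔ IsMin (runOf σ) v := by
  obtain ⟨p, rfl⟩ := σ.surjective v
  rw [Equiv.symm_apply_apply]
  constructor
  · intro h u hu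
    obtain ⟨q, rfl⟩ := σ.surjective u
    simp only [runOf, Equiv.symm_apply_apply] at hu
    rcases le_or_gt p q with hpq | hpq
    · exact run_increasing σ p q hpq q.isLt hu.symm
    · exfalso
      rw [Fin.lt_def] at hpq
      simp only [startsB, Bool.or_eq_true, beq_iff_eq] at h
      rcases h with h | h
      · omega
      · have h1 := runIdx_succ σ (p.val - 1)
        rw [if_pos h, Nat.sub_add_cancel (by omega)] at h1
        have h2 := runIdx_mono σ (show q.val ≤ p.val - 1 by omega)
        omega
  · intro h
    by_contra hs
    simp only [startsB, Bool.or_eq_true, beq_iff_eq, not_or] at hs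
    obtain ⟨p, hp⟩ := p
    obtain ⟨k, rfl⟩ : ∃ k, p = k + 1 := ⟨p - 1, by simp at hs; omega⟩
    simp only [Nat.add_sub_cancel] at hs
    have h1 := runIdx_succ σ k
    rw [if_neg hs.2] at h1
    have h3 := h (σ ⟨k, by omega⟩) (by simp [runOf, h1])
    rw [descB_iff σ hp, not_lt] at hs
    have := le_antisymm h3 hs.2
    simp at this

theorem isMax_iff (σ : Equiv.Perm (Fin n)) (v : Fin n) :
    endsB σ (σ.symm v) = true ↔ IsMax (runOf σ) v := by
  obtain ⟨p, rfl⟩ := σ.surjective v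
  rw [Equiv.symm_apply_apply]
  constructor
  · intro h u hu
    obtain ⟨q, rfl⟩ := σ.surjective u
    simp only [runOf, Equiv.symm_apply_apply] at hu
    rcases le_or_gt q p with hpq | hpq
    · exact run_increasing σ q p hpq p.isLt hu
    · exfalso
      rw [Fin.lt_def] at hpq
      simp only [endsB, Bool.or_eq_true, beq_iff_eq] at h
      rcases h with h | h
      · omega
      · have h1 := runIdx_succ σ p.val
        rw [if_pos h] at h1
        have h2 := runIdx_mono σ (show p.val + 1 ≤ q.val by omega)
        omega
  · intro h
    by_contra hs
    simp only [endsB, Bool.or_eq_true, beq_iff_eq, not_or] at hs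
    obtain ⟨p, hp⟩ := p
    simp only at hs
    have hp' : p + 1 < n := by omega
    have h1 := runIdx_succ σ p
    rw [if_neg hs.2] at h1
    have h3 := h (σ ⟨p + 1, hp'⟩) (by simp [runOf, h1])
    rw [descB_iff σ hp', not_lt] at hs
    have := le_antisymm h3 hs.2
    simp at this

theorem exists_run_start (σ : Equiv.Perm (Fin n)) (R p : ℕ) (hp : p < n)
    (h : runIdx σ p = R + 1) : ∃ q, q + 1 < n ∧ runIdx σ q = R ∧ runIdx σ (q + 1) = R + 1 ∧
      descB σ q = true := by
  induction p with
  | zero => simp [runIdx] at h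
  | succ p ih =>
    by_cases hd : descB σ p = true
    · have h1 := runIdx_succ σ p
      rw [if_pos hd] at h1
      exact ⟨p, hp, by omega, h, hd⟩
    · have h1 := runIdx_succ σ p
      rw [if_neg hd] at h1
      exact ih (by omega) (by omega)

theorem isRuns (σ : Equiv.Perm (Fin n)) : IsRuns (runOf σ) (runCount σ) := by
  have hpos : ∀ R < runCount σ, ∃ p : Fin n, runIdx σ p = R := by
    intro R hR
    rcases Nat.eq_zero_or_pos n with h0 | h0
    · simp [runCount, h0] at hR
    obtain ⟨m, rfl⟩ : ∃ m, n = m + 1 := ⟨n - 1, by omega⟩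
    have hlast : runIdx σ m + 1 = runCount σ := by
      have h1 := runIdx_succ σ m
      rw [descB_last σ le_rfl] at h1
      rw [runCount, if_neg (by omega), h1]
      simp
    obtain ⟨d, hd⟩ : ∃ d, R + d = runIdx σ m := ⟨runIdx σ m - R, by omega⟩
    clear hR hlast
    induction d generalizing R with
    | zero => exact ⟨⟨m, by omega⟩, hd.symm⟩
    | succ d ih =>
      obtain ⟨p, hp⟩ := ih (R + 1) (by omega)
      obtain ⟨q, hq, hq1, -⟩ := exists_run_start σ R p p.isLt hp
      exact ⟨⟨q, by omega⟩, hq1⟩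
  refine ⟨fun v => ?_, fun R hR => ?_, fun R hR => ?_⟩
  · have h := runIdx_mono σ (σ.symm v).isLt.le
    have hn : n ≠ 0 := fun h0 => by subst h0; exact v.elim0
    rw [runCount, if_neg hn]
    exact Nat.lt_succ_of_le h
  · obtain ⟨p, hp⟩ := hpos R hR
    exact ⟨σ p, by simpa [runOf] using hp⟩
  · obtain ⟨p, hp⟩ := hpos (R + 1) hR
    obtain ⟨q, hq, hq1, hq2, hd⟩ := exists_run_start σ R p p.isLt hp
    exact ⟨σ ⟨q, by omega⟩, σ ⟨q + 1, hq⟩, by simpa [runOf] using hq1,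
      by simpa [runOf] using hq2, (descB_iff σ hq).1 hd⟩

theorem lsgAt_eq (σ : Equiv.Perm (Fin n)) (v : Fin n) :
    lsgAt σ v = leftCover (runOf σ) (runCount σ) v := by
  classical
  rw [lsgAt, leftCover]

theorem rsgAt_eq (σ : Equiv.Perm (Fin n)) (v : Fin n) :
    rsgAt σ v = rightCover (runOf σ) (runCount σ) v := by
  classical
  rw [rsgAt, rightCover]

/-- The step recorded for the value `v` of `σ`. -/
def stepAt (σ : Equiv.Perm (Fin n)) (v : Fin n) : Step :=
  ⟨(startsB σ (σ.symm v), endsB σ (σ.symm v)), lsgAt σ v⟩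

/-- The steps of all values of `σ`, in increasing order of the values. -/
def code (σ : Equiv.Perm (Fin n)) : List Step := List.ofFn (stepAt σ)

theorem code_spec (σ : Equiv.Perm (Fin n)) :
    code σ ∈ codes n 0 ∧ wt 0 (code σ) = n - runCount σ + 2 * lsg σ + rsg σ := by
  classical
  have hr := isRuns σ
  have hb : ∀ (b : Bool) (P : Prop) [Decidable P], (b = true ↔ P) →
      b.toNat + (if P then 0 else 1) = 1 := by
    intro b P _ h
    by_cases hP : P
    · simp [hP, h.2 hP]
    · have : b = false := by simpa using mt h.1 hP
      simp [hP, this]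
  obtain ⟨h1, h2⟩ := mem_codes (fun k => openCard (runOf σ) k (runCount σ)) (stepAt σ) height_last
    (fun v => by
      have h1 := height_eq hr v
      have h2 := hb _ _ (isMin_iff σ v)
      simp only [stepAt, lsgAt_eq]
      omega)
    (fun v => by
      have h1 := height_eq hr v
      have h2 := hb _ _ (isMin_iff σ v)
      have h3 := height_succ_eq hr v
      have h4 := hb _ _ (isMax_iff σ v)
      simp only [stepAt]
      omega)
  simp only [height_zero] at h1 h2
  refine ⟨h1, ?_⟩
  rw [code, h2]
  simp only [lsg, rsg, lsgAt_eq, rsgAt_eq, stepAt]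
  exact (total_eq hr).symm

/-- A permutation is determined by the relative order of the positions of its values, since
`Fin n` has no order automorphism but the identity. -/
theorem eq_of_symm_lt_iff {σ τ : Equiv.Perm (Fin n)}
    (h : ∀ a b, σ.symm a < σ.symm b ↔ τ.symm a < τ.symm b) : σ = τ := by
  let e : Fin n ≃o Fin n := ⟨σ.trans τ.symm, by
    intro a b
    have := h (σ b) (σ a)
    simp only [Equiv.symm_apply_apply] at this
    simp only [Equiv.trans_apply]
    rw [← not_lt, ← not_lt, this]⟩
  have he : e = OrderIso.refl _ := Subsingleton.elim _ _
  ext a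
  have := congrArg (fun f : Fin n ≃o Fin n => f a) he
  have h2 : τ.symm (σ a) = a := this
  rw [Equiv.symm_apply_eq] at h2
  rw [h2]

theorem code_injective : Function.Injective (code (n := n)) := by
  intro σ τ h
  have hs : ∀ v, stepAt σ v = stepAt τ v := fun v => congrFun (List.ofFn_injective h) v
  have hmin : ∀ v, IsMin (runOf σ) v ↔ IsMin (runOf τ) v := fun v => by
    rw [← isMin_iff, ← isMin_iff, show startsB σ _ = startsB τ _ from
      congrArg (fun w : Step => w.1.1) (hs v)]
  have hmax : ∀ v, IsMax (runOf σ) v ↔ IsMax (runOf τ) v := fun v => by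
    rw [← isMax_iff, ← isMax_iff, show endsB σ _ = endsB τ _ from
      congrArg (fun w : Step => w.1.2) (hs v)]
  have hl : ∀ v : Fin n, openCard (runOf σ) v (runOf σ v) = openCard (runOf τ) v (runOf τ v) := fun v => by
    rw [← leftCover_eq (isRuns σ), ← leftCover_eq (isRuns τ), ← lsgAt_eq, ← lsgAt_eq]
    exact congrArg (fun w : Step => w.2) (hs v)
  have key := fun a b : Fin n => order_eq (isRuns σ) (isRuns τ) hmin hmax hl n a b a.isLt b.isLt
  refine eq_of_symm_lt_iff fun a b => ?_
  rw [symm_lt_iff, symm_lt_iff]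
  have h1 := key a b
  have h2 := key b a
  have h3 : runOf σ a = runOf σ b ↔ runOf τ a = runOf τ b := by omega
  rw [h1, h3]

theorem sum_mad {R : Type*} [CommRing R] (q : R) (n : ℕ) :
    ∑ σ : Equiv.Perm (Fin n), q ^ (n - runCount σ + 2 * lsg σ + rsg σ) = qfact q n := by
  classical
  -- `code` is injective and both sides have `n!` elements.
  have himg : (Finset.univ : Finset (Equiv.Perm (Fin n))).image code = codes n 0 := by
    refine Finset.eq_of_subset_of_card_le ?_ ?_
    · intro L hL
      obtain ⟨σ, -, rfl⟩ := Finset.mem_image.1 hL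
      exact (code_spec σ).1
    · rw [Finset.card_image_of_injective _ code_injective, card_codes, Finset.card_univ,
        Fintype.card_perm, Fintype.card_fin]
  have := sum_codes q n 0
  rw [← himg, Finset.sum_image code_injective.injOn] at this
  simp only [code_spec] at this
  simpa using this

end Perms

/-! ### The inversion number and the major index -/

/-- The permutation of `Fin (n + 1)` whose last letter is `k` and whose other letters are in the
same relative order as those of `τ`. -/
def snoc {n : ℕ} (k : Fin (n + 1)) (τ : Equiv.Perm (Fin n)) : Equiv.Perm (Fin (n + 1)) :=
  (finSuccEquiv' (Fin.last n)).trans ((Equiv.optionCongr τ).trans (finSuccEquiv' k).symm)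

variable {n : ℕ}

@[simp] theorem snoc_last (k : Fin (n + 1)) (τ : Equiv.Perm (Fin n)) :
    snoc k τ (Fin.last n) = k := by simp [snoc]

@[simp] theorem snoc_castSucc (k : Fin (n + 1)) (τ : Equiv.Perm (Fin n)) (i : Fin n) :
    snoc k τ i.castSucc = k.succAbove (τ i) := by
  rw [snoc, Equiv.trans_apply, ← Fin.succAbove_last_apply i, finSuccEquiv'_succAbove]
  simp

theorem snoc_bijective :
    Function.Bijective (fun x : Fin (n + 1) × Equiv.Perm (Fin n) => snoc x.1 x.2) := by
  rw [Fintype.bijective_iff_injective_and_card]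
  refine ⟨?_, by simp [Fintype.card_perm, Nat.factorial_succ]⟩
  rintro ⟨k, τ⟩ ⟨k', τ'⟩ h
  simp only at h
  have hk : k = k' := by rw [← snoc_last k τ, h, snoc_last]
  subst hk
  congr
  ext i : 1
  have := congrArg (fun σ => σ i.castSucc) h
  simpa using this

theorem sum_perm_succ {M : Type*} [AddCommMonoid M] (f : Equiv.Perm (Fin (n + 1)) → M) :
    ∑ σ, f σ = ∑ k, ∑ τ, f (snoc k τ) := by
  rw [← Fintype.sum_prod_type', ← snoc_bijective.sum_comp]

theorem qint_eq_sum_fin {R : Type*} [CommRing R] (q : R) (n : ℕ) :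
    ∑ k : Fin (n + 1), q ^ (n - k.val) = qint q (n + 1) := by
  rw [qint, ← Finset.sum_range_reflect, ← Fin.sum_univ_eq_sum_range]
  simp

theorem inv_eq_sum {n : ℕ} (σ : Equiv.Perm (Fin n)) :
    inv σ = ∑ i, ∑ j, if i < j ∧ σ j < σ i then 1 else 0 := by
  rw [inv, Finset.card_filter, Fintype.sum_prod_type]

theorem inv_snoc (k : Fin (n + 1)) (τ : Equiv.Perm (Fin n)) :
    inv (snoc k τ) = inv τ + (n - k.val) := by
  have hcount : (∑ i : Fin n, if k < k.succAbove (τ i) then 1 else 0) = n - k.val := by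
    rw [Equiv.sum_comp τ (fun j => if k < k.succAbove j then 1 else 0)]
    have : ∀ j : Fin n, (k < k.succAbove j) ↔ k.val ≤ j.val := fun j => by
      rw [Fin.lt_succAbove_iff_le_castSucc, Fin.le_def, Fin.val_castSucc]
    simp only [this]
    rw [Fin.sum_univ_eq_sum_range (fun j => if k.val ≤ j then 1 else 0), ← Finset.card_filter]
    have : (Finset.range n).filter (fun j => k.val ≤ j) = Finset.Ico k.val n := by
      ext j; simp [and_comm]
    rw [this, Nat.card_Ico]
  rw [inv_eq_sum, inv_eq_sum, Fin.sum_univ_castSucc]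
  simp only [Fin.sum_univ_castSucc, snoc_castSucc, snoc_last, Fin.castSucc_lt_castSucc_iff,
    Fin.castSucc_lt_last, true_and, lt_irrefl, false_and, if_false, add_zero,
    Finset.sum_add_distrib, hcount, (Fin.strictMono_succAbove k).lt_iff_lt]
  simp [Fin.not_lt.2 (Fin.le_last _)]

theorem sum_inv {R : Type*} [CommRing R] (q : R) (n : ℕ) :
    ∑ σ : Equiv.Perm (Fin n), q ^ inv σ = qfact q n := by
  induction n with
  | zero => simp [qfact, inv]
  | succ n ih =>
    rw [sum_perm_succ]
    simp only [inv_snoc, pow_add, ← Finset.sum_mul, ih, ← Finset.mul_sum, qint_eq_sum_fin]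
    exact (Finset.prod_range_succ _ _).symm

theorem maj_eq_sum {n : ℕ} (σ : Equiv.Perm (Fin n)) :
    maj σ = ∑ j ∈ Finset.range n, if descB σ j = true then j + 1 else 0 := by
  rw [maj, Finset.sum_filter]

theorem maj_snoc_last (τ : Equiv.Perm (Fin n)) : maj (snoc (Fin.last n) τ) = maj τ := by
  rw [maj_eq_sum, maj_eq_sum, Finset.sum_range_succ, descB_last _ le_rfl]
  simp only [Bool.false_eq_true, if_false, add_zero]
  refine Finset.sum_congr rfl fun j hj => ?_
  have hj := Finset.mem_range.1 hj
  congr 1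
  rw [descB_iff _ (Nat.succ_lt_succ hj)]
  have e1 : (⟨j, by omega⟩ : Fin (n + 1)) = Fin.castSucc ⟨j, hj⟩ := rfl
  rw [e1, snoc_castSucc, Fin.succAbove_last]
  by_cases h : j + 1 < n
  · have e2 : (⟨j + 1, by omega⟩ : Fin (n + 1)) = Fin.castSucc ⟨j + 1, h⟩ := rfl
    rw [e2, snoc_castSucc, Fin.succAbove_last, Fin.castSucc_lt_castSucc_iff, descB_iff _ h]
  · have e2 : (⟨j + 1, by omega⟩ : Fin (n + 1)) = Fin.last n := by
      ext; simp; omega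
    rw [e2, snoc_last, descB_last _ (by omega)]
    simp [Fin.not_lt.2 (Fin.le_last _)]

/-- Add `1` modulo `n + 1` to every letter. -/
def rotate (σ : Equiv.Perm (Fin (n + 1))) : Equiv.Perm (Fin (n + 1)) :=
  σ.trans (finRotate (n + 1))

/-- Rotation turns the largest letter, at position `p`, into the smallest one.  The only change in
the descent set is that the descent right after that letter is replaced by one right before it (or
is lost, when `p` is the first position), so the major index drops by `1`. -/
theorem maj_rotate (σ : Equiv.Perm (Fin (n + 1))) (h : σ (Fin.last n) ≠ Fin.last n) :
    maj (rotate σ) + 1 = maj σ := by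
  obtain ⟨p, hp⟩ := σ.surjective (Fin.last n)
  have hpn : p.val < n := by
    have : p ≠ Fin.last n := by rintro rfl; exact h hp
    have := Fin.val_lt_last this
    exact this
  have hval : ∀ i, (rotate σ i).val = if i = p then 0 else (σ i).val + 1 := by
    intro i
    rw [rotate, Equiv.trans_apply]
    split_ifs with hi
    · rw [hi, hp]; simp
    · have : σ i ≠ Fin.last n := fun h => hi (σ.injective (h.trans hp.symm))
      exact coe_finRotate_of_ne_last this
  have hle : ∀ i, i ≠ p → (σ i).val < n := fun i hi =>
    Fin.val_lt_last fun h => hi (σ.injective (h.trans hp.symm))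
  have hpv : (σ p).val = n := by rw [hp]; rfl
  -- Summed over `j`, the two correction terms contribute `p + 1` and `p`.
  have key : ∀ j ∈ Finset.range (n + 1),
      (if descB (rotate σ) j = true then j + 1 else 0) + (if p.val = j then j + 1 else 0) =
      (if descB σ j = true then j + 1 else 0) + (if p.val = j + 1 then j + 1 else 0) := by
    intro j hj
    have hj := Finset.mem_range.1 hj
    by_cases hjn : j + 1 < n + 1
    · simp only [descB_iff _ hjn, Fin.lt_def, hval, Fin.ext_iff]
      by_cases h1 : j = p.val
      · have h2 : ¬ j + 1 = p.val := by omega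
        have h3 := hle ⟨j + 1, hjn⟩ (by simp [Fin.ext_iff, h2])
        have h4 : (σ ⟨j, by omega⟩).val = n := by
            rw [show (⟨j, by omega⟩ : Fin (n + 1)) = p from Fin.ext h1, hpv]
        have h5 : ¬ p.val = j + 1 := by omega
        simp [h1.symm, h4, h3]
      · by_cases h2 : j + 1 = p.val
        · have h3 := hle ⟨j, by omega⟩ (by simp [Fin.ext_iff, h1])
          have h4 : (σ ⟨j + 1, hjn⟩).val = n := by
            rw [show (⟨j + 1, hjn⟩ : Fin (n + 1)) = p from Fin.ext h2, hpv]
          simp [h2.symm, h4, h3.le]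
        · simp [h1, h2, Ne.symm h1, Ne.symm h2]
    · rw [descB_last _ (by omega), descB_last _ (by omega)]
      have h1 : ¬ p.val = j := by omega
      have h2 : ¬ p.val = j + 1 := by omega
      simp [h1, h2]
  have hsum := Finset.sum_congr rfl key
  rw [Finset.sum_add_distrib, Finset.sum_add_distrib, ← maj_eq_sum, ← maj_eq_sum,
    Finset.sum_ite_eq] at hsum
  have hlast : (∑ j ∈ Finset.range (n + 1), if p.val = j + 1 then j + 1 else 0) = p.val := by
    -- Drop the vanishing term `j = 0` of `∑ j, if p = j then j else 0`.
    have h0 := Finset.sum_range_succ' (fun j => if p.val = j then j else 0) (n + 1)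
    rw [Finset.sum_ite_eq] at h0
    rw [if_pos (Finset.mem_range.2 (by omega)), ite_self, add_zero] at h0
    exact h0.symm
  rw [hlast, if_pos (Finset.mem_range.2 p.isLt)] at hsum
  omega

theorem sum_snoc_eq {R : Type*} [CommRing R] (q : R) (k : Fin (n + 1)) :
    ∑ τ, q ^ maj (snoc k τ) =
      ∑ σ : Equiv.Perm (Fin (n + 1)), if σ (Fin.last n) = k then q ^ maj σ else 0 := by
  rw [sum_perm_succ]
  simp only [snoc_last]
  rw [Finset.sum_eq_single k]
  · simp
  · intro b _ hb; simp [hb]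
  · simp

/-- By rotation, lowering the last letter by `1` multiplies the generating polynomial of `maj` by
`q`. -/
theorem sum_snoc_maj {R : Type*} [CommRing R] (q : R) (k : Fin (n + 1)) :
    ∑ τ, q ^ maj (snoc k τ) = q ^ (n - k.val) * ∑ τ : Equiv.Perm (Fin n), q ^ maj τ := by
  induction k using Fin.reverseInduction with
  | last => simp [maj_snoc_last]
  | cast k ih =>
    have hinj : Function.Bijective (rotate (n := n)) := by
      rw [← Finite.injective_iff_bijective]
      intro a b hab
      ext i : 1
      exact (finRotate (n + 1)).injective (congrArg (fun σ => σ i) hab)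
    have hk : n - (k.castSucc).val = (n - k.succ.val) + 1 := by
      simp; omega
    rw [hk, pow_succ', mul_assoc, ← ih, sum_snoc_eq, sum_snoc_eq, Finset.mul_sum,
      ← hinj.sum_comp (fun σ => q * if σ (Fin.last n) = k.succ then q ^ maj σ else 0)]
    refine Finset.sum_congr rfl fun σ _ => ?_
    have hrot : rotate σ (Fin.last n) = k.succ ↔ σ (Fin.last n) = k.castSucc := by
      have hk : finRotate (n + 1) k.castSucc = k.succ := by simp
      rw [rotate, Equiv.trans_apply, ← hk, (finRotate (n + 1)).injective.eq_iff]
    simp only [hrot]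
    split_ifs with h
    · rw [← maj_rotate σ (by rw [h]; exact (Fin.castSucc_lt_last k).ne), pow_succ']
    · simp

theorem sum_maj {R : Type*} [CommRing R] (q : R) (n : ℕ) :
    ∑ σ : Equiv.Perm (Fin n), q ^ maj σ = qfact q n := by
  induction n with
  | zero => simp [qfact, maj]
  | succ n ih =>
    rw [sum_perm_succ]
    simp only [sum_snoc_maj, ← Finset.sum_mul, ih, qint_eq_sum_fin]
    rw [mul_comm]
    exact (Finset.prod_range_succ _ _).symm

end Mad
end SS

open SS in
/-- `s(σ) = n - run(σ) + 2 lsg(σ) + rsg(σ)` is Mahonian: its generating polynomial over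
`S_n` equals that of the major index, equivalently that of the inversion number. -/
theorem stmt16 (n : ℕ) :
    (∑ σ : Equiv.Perm (Fin n),
        (Polynomial.X : Polynomial ℤ) ^ (n - runCount σ + 2 * lsg σ + rsg σ)
      = ∑ σ : Equiv.Perm (Fin n), (Polynomial.X : Polynomial ℤ) ^ (maj σ)) ∧
    (∑ σ : Equiv.Perm (Fin n),
        (Polynomial.X : Polynomial ℤ) ^ (n - runCount σ + 2 * lsg σ + rsg σ)
      = ∑ σ : Equiv.Perm (Fin n), (Polynomial.X : Polynomial ℤ) ^ (inv σ)) := by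
  exact ⟨(Mad.sum_mad _ n).trans (Mad.sum_maj _ n).symm,
    (Mad.sum_mad _ n).trans (Mad.sum_inv _ n).symm⟩
end
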